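/- Let n ≥ 2, j ≥ 3, and let β ≥ 0 and α be real numbers such that either (n−3)/2 < β < (n−1)/2 and α ≤ β + (j−1)(β − (n−3)/2), or β ≥ (n−1)/2 and α < β + (j−1). Then there exist λ with 0 < λ < 1 and a constant C (depending on n, j, α, β and χ) such that for all Schwartz functions f₁,…,f_j on ℝⁿ and every 𝐫 = (r₁,…,r_{j−1}) ∈ (0,∞)^{j−1}, ‖ χ(·) K_{j,𝐫}(f̂₁,…,f̂_j)(·) ‖_{L²_α} ≤ C ( ∏_{i=1}^{j−1} (1+r_i)^{λ} ) ∏_{l=1}^{j} ‖f_l‖_{W^{β,2}_2}. -/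

import Mathlib

open MeasureTheory Filter Set
open scoped ENNReal RealInnerProductSpace

noncomputable section

abbrev Euc (n : ℕ) := EuclideanSpace ℝ (Fin n)

/-- The Japanese bracket `⟨x⟩ = (1+|x|²)^{1/2}`. -/
def jap {n : ℕ} (x : Euc n) : ℝ := Real.sqrt (1 + ‖x‖ ^ 2)

/-- The Ewald sphere measure `σ_{rη}`: the `(n-1)`-dimensional Hausdorff measure restricted
to `Γ_r(η) = {ξ : |ξ - η/2| = r|η|/2}`. -/
def ewaldM (n : ℕ) (r : ℝ) (η : Euc n) : Measure (Euc n) :=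
  (MeasureTheory.Measure.hausdorffMeasure ((n : ℝ) - 1)).restrict
    (Metric.sphere ((2 : ℝ)⁻¹ • η) (r * ‖η‖ / 2))

/-- The Fourier transform `f̂(ξ) = ∫ e^{-iξ·x} f(x) dx`. -/
def ft {n : ℕ} (f : Euc n → ℂ) (ξ : Euc n) : ℂ :=
  ∫ x : Euc n, Complex.exp (-Complex.I * ((⟪ξ, x⟫ : ℝ) : ℂ)) * f x

/-- `⟨D⟩^β f`: inverse Fourier transform of `⟨ξ⟩^β f̂(ξ)`. -/
def besselD {n : ℕ} (β : ℝ) (f : Euc n → ℂ) (x : Euc n) : ℂ :=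
  (((2 * Real.pi) ^ n : ℝ)⁻¹ : ℝ) •
    ∫ ξ : Euc n, Complex.exp (Complex.I * ((⟪ξ, x⟫ : ℝ) : ℂ)) *
      (((jap ξ ^ β : ℝ) : ℂ) * ft f ξ)

/-- The weighted Sobolev norm `‖f‖_{W^{β,2}_δ} = ‖⟨·⟩^δ ⟨D⟩^β f‖_{L²}`. -/
def wSobNorm {n : ℕ} (β δ : ℝ) (f : Euc n → ℂ) : ℝ≥0∞ :=
  eLpNorm (fun x : Euc n => (jap x ^ δ : ℝ) • besselD β f x) 2 volume

/-- The spherical operator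
`S_r(q)(η) = (2/(|η|(1+r))) ∫_{Γ_r(η)} q̂(ξ) q̂(η-ξ) dσ_{rη}(ξ)`. -/
def Sr {n : ℕ} (r : ℝ) (q : Euc n → ℂ) (η : Euc n) : ℂ :=
  ((2 / (‖η‖ * (1 + r))) : ℝ) • ∫ ξ, ft q ξ * ft q (η - ξ) ∂(ewaldM n r η)

/-- `K_r(g₁,g₂)(η) = (1/|η|) ∫_{Γ_r(η)} |g₁(ξ)||g₂(η-ξ)| dσ_{rη}(ξ)`. -/
def Kr {n : ℕ} (r : ℝ) (g₁ g₂ : Euc n → ℂ) (η : Euc n) : ℝ :=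
  ‖η‖⁻¹ * ∫ ξ, ‖g₁ ξ‖ * ‖g₂ (η - ξ)‖ ∂(ewaldM n r η)

/-- The `i`-th difference in the chain `η - ξ₀, ξ₀ - ξ₁, …, ξ_{k-2} - ξ_{k-1}, ξ_{k-1}`
(`0`-indexed version of `η-ξ₁, ξ₁-ξ₂, …, ξ_{j-2}-ξ_{j-1}, ξ_{j-1}` with `k = j-1`). -/
def chainDiff {n : ℕ} (k : ℕ) (η : Euc n) (ξ : Fin k → Euc n) (i : Fin (k + 1)) : Euc n :=
  (if h : (i : ℕ) = 0 then η else ξ ⟨(i : ℕ) - 1, by have := i.isLt; omega⟩) -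
    (if h : (i : ℕ) < k then ξ ⟨(i : ℕ), h⟩ else 0)

/-- `K_{j,𝐫}(g₁,…,g_j)(η)` with `j = k + 1` (`0`-indexed as `g : Fin (k+1) → _`):
`|η|^{-(j-1)} ∫_{Γ_{r₁}(η)}⋯∫_{Γ_{r_{j-1}}(η)} |g₁(η-ξ₁)| ∏|g_{i+1}(ξᵢ-ξ_{i+1})| |g_j(ξ_{j-1})| dσ`. -/
def Kj {n : ℕ} (k : ℕ) (r : Fin k → ℝ) (g : Fin (k + 1) → Euc n → ℂ) (η : Euc n) : ℝ :=
  ‖η‖ ^ (-(k : ℝ)) *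
    ∫ ξ : Fin k → Euc n, ∏ i : Fin (k + 1), ‖g i (chainDiff k η ξ i)‖
      ∂(Measure.pi fun i => ewaldM n (r i) η)


def prj {m : ℕ} (a : Fin (m+1)) (x : Euc (m+1)) : Fin m → ℝ := fun i => x (a.succAbove i)

lemma prj_cont {m : ℕ} (a : Fin (m+1)) : Continuous (prj a) := by
  unfold prj; fun_prop

/-- a spherical cap on which the projection along the `a`-th axis is bi-Lipschitz -/
def cap {m : ℕ} (c : Euc (m+1)) (R : ℝ) (p : Fin (m+1) × Bool) : Set (Euc (m+1)) :=
  {x | x ∈ Metric.sphere c R ∧ R / (m+1) ≤ (if p.2 then 1 else -1) * (x p.1 - c p.1)}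

lemma cap_closed {m : ℕ} (c : Euc (m+1)) (R : ℝ) (p : Fin (m+1) × Bool) : IsClosed (cap c R p) := by
  apply IsClosed.inter Metric.isClosed_sphere
  exact isClosed_le (f := fun _ => R / (m+1)) (g := fun x : Euc (m+1) => (if p.2 then 1 else -1) * (x p.1 - c p.1)) (by fun_prop) (by fun_prop)

lemma sphere_sum {m : ℕ} {c x : Euc (m+1)} {R : ℝ} (hR : 0 ≤ R) (hx : x ∈ Metric.sphere c R)
    (a : Fin (m+1)) :
    (x a - c a)^2 + ∑ i : Fin m, (prj a x i - prj a c i)^2 = R^2 := by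
  have h : ‖x - c‖^2 = R^2 := by rw [← dist_eq_norm]; rw [hx]
  rw [EuclideanSpace.norm_sq_eq, Fin.sum_univ_succAbove _ a] at h
  simpa [prj] using h

lemma sphere_sub_caps {m : ℕ} (c : Euc (m+1)) {R : ℝ} (hR : 0 < R) :
    Metric.sphere c R ⊆ ⋃ p, cap c R p := by
  intro x hx
  by_contra hcon
  simp only [mem_iUnion, not_exists] at hcon
  have h2 : ∀ a, (x a - c a)^2 < (R/(m+1))^2 := by
    intro a
    have h1 := hcon (a, true)
    have h2 := hcon (a, false)
    simp only [cap, mem_ofPred_eq, hx, true_and, not_le] at h1 h2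
    norm_num at h1 h2
    apply sq_lt_sq'
    · linarith
    · linarith
  have h : ‖x - c‖^2 = R^2 := by rw [← dist_eq_norm]; rw [hx]
  rw [EuclideanSpace.norm_sq_eq] at h
  have h3 : ∑ i, ‖(x - c) i‖^2 < ∑ i : Fin (m+1), (R/(m+1))^2 := by
    apply Finset.sum_lt_sum_of_nonempty Finset.univ_nonempty
    intro i _
    simpa using h2 i
  rw [h] at h3
  simp at h3
  have : ((m:ℝ)+1) * (R/(m+1))^2 = R^2 / (m+1) := by field_simp
  rw [this, lt_div_iff₀ (by positivity)] at h3
  nlinarith [sq_nonneg R, (Nat.cast_nonneg m : (0:ℝ) ≤ m)]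

lemma cap_anti {m : ℕ} (c : Euc (m+1)) {R : ℝ} (hR : 0 < R) (p : Fin (m+1) × Bool)
    {x y : Euc (m+1)} (hx : x ∈ cap c R p) (hy : y ∈ cap c R p) :
    dist x y ≤ (m * (m+2) : ℝ) * dist (prj p.1 x) (prj p.1 y) := by
  obtain ⟨a, s⟩ := p
  obtain ⟨hx1, hx2⟩ := hx
  obtain ⟨hy1, hy2⟩ := hy
  simp only at hx2 hy2 ⊢
  have ex := sphere_sum hR.le hx1 a
  have ey := sphere_sum hR.le hy1 a
  set D := dist (prj a x) (prj a y) with hD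
  have hD0 : 0 ≤ D := dist_nonneg
  have hi : ∀ i, |prj a x i - prj a y i| ≤ D := fun i => by
    rw [← Real.dist_eq]; exact dist_le_pi_dist _ _ i
  have hb : ∀ z : Euc (m+1), (z a - c a)^2 + ∑ i : Fin m, (prj a z i - prj a c i)^2 = R^2 → ∀ i,
      |prj a z i - prj a c i| ≤ R := by
    intro z hz i
    apply abs_le_of_sq_le_sq _ hR.le
    have := Finset.single_le_sum (f := fun i => (prj a z i - prj a c i)^2) (fun i _ => sq_nonneg _) (Finset.mem_univ i)
    nlinarith [sq_nonneg (z a - c a)]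
  have key : (x a - y a) * ((x a - c a) + (y a - c a)) =
      - ∑ i : Fin m, (prj a x i - prj a y i) * ((prj a x i - prj a c i) + (prj a y i - prj a c i)) := by
    have : ∑ i : Fin m, (prj a x i - prj a y i) * ((prj a x i - prj a c i) + (prj a y i - prj a c i))
       = ∑ i : Fin m, (prj a x i - prj a c i)^2 - ∑ i : Fin m, (prj a y i - prj a c i)^2 := by
      rw [← Finset.sum_sub_distrib]; apply Finset.sum_congr rfl; intros; ring
    rw [this]; linarith
  have k2 : |x a - y a| * |(x a - c a) + (y a - c a)| ≤ m * (D * (2*R)) := by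
    rw [← abs_mul, key, abs_neg]
    refine (Finset.abs_sum_le_sum_abs _ _).trans ?_
    have : ∀ i ∈ (Finset.univ : Finset (Fin m)), |(prj a x i - prj a y i) * ((prj a x i - prj a c i) + (prj a y i - prj a c i))| ≤ D * (2*R) := by
      intro i _
      rw [abs_mul]
      apply mul_le_mul (hi i) _ (abs_nonneg _) hD0
      refine (abs_add_le _ _).trans ?_
      linarith [hb x ex i, hb y ey i]
    refine (Finset.sum_le_sum this).trans ?_
    simp
  have k3 : 2 * (R/(m+1)) ≤ |(x a - c a) + (y a - c a)| := by
    cases s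
    · simp at hx2 hy2
      rw [← abs_neg]
      refine le_trans ?_ (le_abs_self _)
      linarith
    · simp at hx2 hy2
      refine le_trans ?_ (le_abs_self _)
      linarith
  have k4 : |x a - y a| ≤ m * (m+1) * D := by
    have h5 : |x a - y a| * (2 * (R/(m+1))) ≤ m * (D * (2*R)) :=
      (mul_le_mul_of_nonneg_left k3 (abs_nonneg _)).trans k2
    have h6 : |x a - y a| * (2 * (R/(m+1))) = (|x a - y a| / (m+1)) * (2 * R) := by ring
    have h7 : m * (D * (2*R)) = (m * D) * (2 * R) := by ring
    rw [h6, h7] at h5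
    have h8 := le_of_mul_le_mul_right h5 (by positivity)
    rw [div_le_iff₀ (by positivity)] at h8
    linarith
  rw [dist_eq_norm]
  have : ‖x - y‖ ≤ ∑ i, |x i - y i| := by
    rw [EuclideanSpace.norm_eq]
    rw [Real.sqrt_le_left (Finset.sum_nonneg fun i _ => abs_nonneg _)]
    have := Finset.sum_sq_le_sq_sum_of_nonneg (s := Finset.univ) (f := fun i => |x i - y i|) (fun i _ => abs_nonneg _)
    simpa using this
  refine this.trans ?_
  rw [Fin.sum_univ_succAbove _ a]
  have : ∑ i : Fin m, |x (a.succAbove i) - y (a.succAbove i)| ≤ m * D := by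
    refine (Finset.sum_le_sum (fun i _ => hi i)).trans ?_
    simp
  nlinarith

lemma cap_meas {m : ℕ} (c : Euc (m+1)) {R : ℝ} (hR : 0 < R) (p : Fin (m+1) × Bool)
    (A : Set (Euc (m+1))) (hA : A ⊆ cap c R p) :
    Measure.hausdorffMeasure (m:ℝ) A ≤ ((m * (m+2) : ℕ) : ℝ≥0∞) ^ (m:ℝ) * volume (prj p.1 '' A) := by
  have h1 : AntilipschitzWith ((m * (m+2) : ℕ)) (fun x : A => prj p.1 x.1) := by
    apply AntilipschitzWith.of_le_mul_dist
    intro x y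
    have := cap_anti c hR p (hA x.2) (hA y.2)
    simpa [Subtype.dist_eq] using this
  have h2 := h1.le_hausdorffMeasure_image (d := (m:ℝ)) (by positivity) univ
  have h3 := (isometry_subtype_coe (s := A)).hausdorffMeasure_image (d := (m:ℝ)) (Or.inl (by positivity)) univ
  rw [← h3] at h2
  simp only [image_univ, Subtype.range_coe_subtype, ofPred_mem_eq] at h2
  refine h2.trans ?_
  have h4 : (range fun x : A => prj p.1 x.1) = prj p.1 '' A := by
    ext; simp
  rw [h4]
  have h5 : (Measure.hausdorffMeasure (m:ℝ) : Measure (Fin m → ℝ)) = volume := by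
    have := hausdorffMeasure_pi_real (ι := Fin m)
    simpa using this
  rw [h5]
  simp

lemma cap_lint {m : ℕ} (c : Euc (m+1)) {R : ℝ} (hR : 0 < R) (p : Fin (m+1) × Bool)
    (W : (Fin m → ℝ) → ℝ≥0∞) (hW : Measurable W) :
    ∫⁻ x in cap c R p, W (prj p.1 x) ∂(Measure.hausdorffMeasure (m:ℝ)) ≤
      ((m * (m+2) : ℕ) : ℝ≥0∞) ^ (m:ℝ) * ∫⁻ y in Metric.closedBall (prj p.1 c) R, W y := by
  rw [← lintegral_map hW (prj_cont p.1).measurable, ← smul_eq_mul, ← lintegral_smul_measure]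
  apply lintegral_mono' _ le_rfl
  apply Measure.le_intro
  intro B hB _
  rw [Measure.map_apply (prj_cont p.1).measurable hB, Measure.restrict_apply ((prj_cont p.1).measurable hB)]
  refine (cap_meas c hR p _ inter_subset_right).trans ?_
  rw [Measure.smul_apply, smul_eq_mul, Measure.restrict_apply hB]
  gcongr
  rintro _ ⟨x, ⟨hx1, hx2⟩, rfl⟩
  refine ⟨hx1, ?_⟩
  have := sphere_sum hR.le hx2.1 p.1
  rw [Metric.mem_closedBall, dist_pi_le_iff hR.le]
  intro i
  rw [Real.dist_eq]
  apply abs_le_of_sq_le_sq _ hR.le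
  have h2 := Finset.single_le_sum (f := fun i => (prj p.1 x i - prj p.1 c i)^2) (fun i _ => sq_nonneg _) (Finset.mem_univ i)
  nlinarith [sq_nonneg (x p.1 - c p.1)]

def KK (m : ℕ) : ℝ≥0∞ := 2 * ((m * (m+2) : ℕ) : ℝ≥0∞) ^ (m:ℝ)

lemma KK_ne_top (m : ℕ) : KK m ≠ ⊤ := by
  unfold KK
  apply ENNReal.mul_ne_top (by simp)
  apply ENNReal.rpow_ne_top_of_nonneg (by positivity) (ENNReal.natCast_ne_top _)

lemma sphere_lint {m : ℕ} (c : Euc (m+1)) {R : ℝ} (hR : 0 < R) (F : Euc (m+1) → ℝ≥0∞)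
    (W : Fin (m+1) → (Fin m → ℝ) → ℝ≥0∞) (hW : ∀ a, Measurable (W a))
    (hF : ∀ a x, F x ≤ W a (prj a x)) :
    ∫⁻ x in Metric.sphere c R, F x ∂(Measure.hausdorffMeasure (m:ℝ)) ≤
      KK m * ∑ a, ∫⁻ y in Metric.closedBall (prj a c) R, W a y := by
  refine (lintegral_mono_set (sphere_sub_caps c hR)).trans ?_
  refine (lintegral_iUnion_le _ _).trans ?_
  rw [tsum_fintype]
  have : ∀ p ∈ (Finset.univ : Finset (Fin (m+1) × Bool)), ∫⁻ x in cap c R p, F x ∂(Measure.hausdorffMeasure (m:ℝ)) ≤ ((m * (m+2) : ℕ) : ℝ≥0∞) ^ (m:ℝ) * ∫⁻ y in Metric.closedBall (prj p.1 c) R, W p.1 y := by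
    intro p _
    refine le_trans ?_ (cap_lint c hR p (W p.1) (hW p.1))
    exact lintegral_mono (fun x => hF _ x)
  refine (Finset.sum_le_sum this).trans ?_
  rw [Fintype.sum_prod_type]
  simp only [Fintype.univ_bool, Finset.sum_const]
  rw [KK, Finset.mul_sum]
  apply Finset.sum_le_sum
  intro a _
  simp [mul_assoc]
open scoped Topology

lemma ftc1 (φ φ' : ℝ → ℂ) (hd : ∀ t, HasDerivAt φ (φ' t) t) (hc : Continuous φ')
    (h0 : Tendsto φ atBot (𝓝 0)) (t : ℝ) :
    ‖φ t‖ₑ^2 ≤ ∫⁻ s, (‖φ s‖ₑ^2 + ‖φ' s‖ₑ^2) := by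
  by_cases hfin : ∫⁻ s, (‖φ s‖ₑ^2 + ‖φ' s‖ₑ^2) = ⊤
  · rw [hfin]; exact le_top
  have hφ : Continuous φ := continuous_iff_continuousAt.2 fun t => (hd t).continuousAt
  set f' : ℝ → ℝ := fun s => 2 * ⟪φ s, φ' s⟫ with hf'
  have hb : ∀ s, ‖f' s‖ₑ ≤ ‖φ s‖ₑ^2 + ‖φ' s‖ₑ^2 := by
    intro s
    have h1 : ‖f' s‖ ≤ ‖φ s‖^2 + ‖φ' s‖^2 := by
      rw [hf']; simp only [norm_mul, Real.norm_eq_abs, abs_two]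
      nlinarith [abs_real_inner_le_norm (φ s) (φ' s), sq_nonneg (‖φ s‖ - ‖φ' s‖)]
    rw [← ofReal_norm, ← ofReal_norm, ← ofReal_norm,
      ← ENNReal.ofReal_pow (norm_nonneg _), ← ENNReal.ofReal_pow (norm_nonneg _),
      ← ENNReal.ofReal_add (by positivity) (by positivity)]
    exact ENNReal.ofReal_le_ofReal h1
  have hcf : Continuous f' := continuous_const.mul (hφ.inner hc)
  have hintg : Integrable f' := by
    refine ⟨hcf.aestronglyMeasurable, ?_⟩
    exact (lintegral_mono hb).trans_lt (lt_top_iff_ne_top.2 hfin)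
  have hder : ∀ s ∈ Iic t, HasDerivAt (fun s => ‖φ s‖^2) (f' s) s := fun s _ => (hd s).norm_sq
  have hlim : Tendsto (fun s => ‖φ s‖^2) atBot (𝓝 0) := by
    simpa using (h0.norm.pow 2)
  have h := integral_Iic_of_hasDerivAt_of_tendsto' hder hintg.integrableOn hlim
  have h3 : ‖φ t‖ₑ^2 = ‖∫ s in Iic t, f' s‖ₑ := by
    rw [h, sub_zero]; simp
  rw [h3]
  refine (enorm_integral_le_lintegral_enorm _).trans ?_
  refine (setLIntegral_le_lintegral _ _).trans (lintegral_mono hb)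

def ins {m : ℕ} (a : Fin (m+1)) (t : ℝ) (y : Fin m → ℝ) : Euc (m+1) :=
  WithLp.toLp 2 (a.insertNth t y : Fin (m+1) → ℝ)

lemma ins_prj {m : ℕ} (a : Fin (m+1)) (x : Euc (m+1)) : ins a (x a) (prj a x) = x := by
  ext i
  simp only [ins]
  induction i using Fin.succAboveCases a <;> simp [prj]

lemma ins_add {m : ℕ} (a : Fin (m+1)) (t : ℝ) (y : Fin m → ℝ) :
    ins a t y = ins a 0 y + t • EuclideanSpace.single a (1:ℝ) := by
  ext i
  simp only [ins]
  induction i using Fin.succAboveCases a <;> simp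

lemma ins_meas {m : ℕ} (a : Fin (m+1)) : Measurable (fun p : ℝ × (Fin m → ℝ) => ins a p.1 p.2) := by
  have h := (MeasurableEquiv.piFinSuccAbove (fun _ : Fin (m+1) => ℝ) a).symm.measurable
  exact (WithLp.measurable_toLp 2 _).comp h

lemma ins_lint {m : ℕ} (a : Fin (m+1)) (E : Euc (m+1) → ℝ≥0∞) (hE : Measurable E) :
    ∫⁻ y : Fin m → ℝ, ∫⁻ t : ℝ, E (ins a t y) = ∫⁻ x, E x := by
  have h1 := (PiLp.volume_preserving_toLp (Fin (m+1))).lintegral_comp hE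
  rw [← h1]
  have h2 := ((volume_preserving_piFinSuccAbove (fun _ : Fin (m+1) => ℝ) a).symm).lintegral_comp
    (f := fun y => E (WithLp.toLp 2 y)) (hE.comp (WithLp.measurable_toLp 2 _))
  rw [← h2]
  have h3 := lintegral_prod_symm (μ := (volume : Measure ℝ)) (ν := (volume : Measure (Fin m → ℝ)))
    (fun p => E (ins a p.1 p.2)) (hE.comp (ins_meas a)).aemeasurable
  rw [← h3]
  rfl

lemma trace_ineq {m : ℕ} (c : Euc (m+1)) {R : ℝ} (hR : 0 < R) (u : Euc (m+1) → ℂ)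
    (u' : Fin (m+1) → Euc (m+1) → ℂ) (hu : Continuous u) (hu' : ∀ a, Continuous (u' a))
    (hd : ∀ a x, ∀ t : ℝ, HasDerivAt (fun t : ℝ => u (x + t • EuclideanSpace.single a (1:ℝ)))
      (u' a (x + t • EuclideanSpace.single a (1:ℝ))) t)
    (h0 : Tendsto u (cocompact _) (𝓝 0)) :
    ∫⁻ x in Metric.sphere c R, ‖u x‖ₑ^2 ∂(Measure.hausdorffMeasure (m:ℝ)) ≤
      KK m * ∑ a, ∫⁻ x, (‖u x‖ₑ^2 + ‖u' a x‖ₑ^2) := by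
  set E : Fin (m+1) → Euc (m+1) → ℝ≥0∞ := fun a x => ‖u x‖ₑ^2 + ‖u' a x‖ₑ^2 with hE
  have hEm : ∀ a, Measurable (E a) := fun a => by
    have := (hu' a).measurable
    have := hu.measurable
    simp only [hE]; fun_prop
  have hWm : ∀ a, Measurable (fun y => ∫⁻ t : ℝ, E a (ins a t y)) := by
    intro a
    exact Measurable.lintegral_prod_left' (f := fun p : ℝ × (Fin m → ℝ) => E a (ins a p.1 p.2))
      ((hEm a).comp (ins_meas a))
  refine (sphere_lint c hR (fun x => ‖u x‖ₑ^2) (fun a y => ∫⁻ t : ℝ, E a (ins a t y)) hWm ?_).trans ?_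
  · intro a x
    have hcont : Continuous fun t : ℝ => ins a t (prj a x) := by
      have : (fun t : ℝ => ins a t (prj a x)) = fun t => ins a 0 (prj a x) + t • EuclideanSpace.single a (1:ℝ) := by
        funext t; exact ins_add _ _ _
      rw [this]; fun_prop
    have h1 := ftc1 (fun t => u (ins a t (prj a x))) (fun t => u' a (ins a t (prj a x))) ?_ ?_ ?_ (x a)
    · rw [ins_prj] at h1
      exact h1
    · intro t
      have h9 : ∀ t, ins a t (prj a x) = ins a 0 (prj a x) + t • EuclideanSpace.single a (1:ℝ) :=
        fun t => ins_add _ _ _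
      have h8 : (fun t => u (ins a t (prj a x))) = fun t => u (ins a 0 (prj a x) + t • EuclideanSpace.single a (1:ℝ)) := by
        funext t; rw [h9 t]
      rw [h8, h9 t]
      exact hd a _ t
    · exact (hu' a).comp hcont
    · refine h0.comp ?_
      have : Tendsto (fun t : ℝ => ins a t (prj a x)) (cocompact ℝ) (cocompact _) := by
        rw [← Metric.cobounded_eq_cocompact (α := Euc (m+1)), ← comap_norm_atTop, tendsto_comap_iff]
        refine tendsto_atTop_mono (f := fun t : ℝ => ‖t‖) ?_ (tendsto_norm_cocompact_atTop)
        intro t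
        have := EuclideanSpace.norm_eq (ins a t (prj a x))
        have h2 := PiLp.norm_apply_le (ins a t (prj a x)) a
        simpa [ins] using h2
      exact this.mono_left atBot_le_cocompact
  · gcongr with a
    refine (setLIntegral_le_lintegral _ _).trans ?_
    exact (ins_lint a (E a) (hEm a)).le
open scoped Topology

lemma cons_meas {k : ℕ} {E : Type*} [MeasurableSpace E] :
    Measurable (fun p : E × (Fin k → E) => (Fin.cons p.1 p.2 : Fin (k+1) → E)) := by
  apply measurable_pi_lambda
  intro i
  refine Fin.cases ?_ (fun j => ?_) i
  · simpa using measurable_fst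
  · simp only [Fin.cons_succ]
    exact (measurable_pi_apply j).comp measurable_snd

lemma lint_pi_succ_prod {k : ℕ} {E : Type*} [MeasurableSpace E] (μ : Fin (k+1) → Measure E)
    [∀ i, SigmaFinite (μ i)] (F : (Fin (k+1) → E) → ℝ≥0∞) (hF : Measurable F) :
    ∫⁻ ξ, F ξ ∂(Measure.pi μ) =
      ∫⁻ p, F (Fin.cons p.1 p.2) ∂((μ 0).prod (Measure.pi (fun i => μ i.succ))) := by
  rw [← ((measurePreserving_piFinSuccAbove μ 0).symm).lintegral_comp hF]
  simp only [Fin.zero_succAbove]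
  apply lintegral_congr
  intro p
  simp [MeasurableEquiv.piFinSuccAbove_symm_apply, Fin.insertNthEquiv]

lemma lint_pi_succ {k : ℕ} {E : Type*} [MeasurableSpace E] (μ : Fin (k+1) → Measure E)
    [∀ i, SigmaFinite (μ i)] (F : (Fin (k+1) → E) → ℝ≥0∞) (hF : Measurable F) :
    ∫⁻ ξ, F ξ ∂(Measure.pi μ) =
      ∫⁻ x, ∫⁻ y, F (Fin.cons x y) ∂(Measure.pi (fun i => μ i.succ)) ∂(μ 0) := by
  rw [lint_pi_succ_prod μ F hF]
  exact lintegral_prod _ (hF.comp cons_meas).aemeasurable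

lemma lint_pi_succ' {k : ℕ} {E : Type*} [MeasurableSpace E] (μ : Fin (k+1) → Measure E)
    [∀ i, SigmaFinite (μ i)] (F : (Fin (k+1) → E) → ℝ≥0∞) (hF : Measurable F) :
    ∫⁻ ξ, F ξ ∂(Measure.pi μ) =
      ∫⁻ y, ∫⁻ x, F (Fin.cons x y) ∂(μ 0) ∂(Measure.pi (fun i => μ i.succ)) := by
  rw [lint_pi_succ_prod μ F hF]
  exact lintegral_prod_symm _ (hF.comp cons_meas).aemeasurable

lemma lint_pi_prod {k : ℕ} {E : Type*} [MeasurableSpace E] (μ : Fin k → Measure E)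
    [∀ i, SigmaFinite (μ i)] (f : Fin k → E → ℝ≥0∞) (hf : ∀ i, Measurable (f i)) :
    ∫⁻ ξ, ∏ i, f i (ξ i) ∂(Measure.pi μ) = ∏ i, ∫⁻ x, f i x ∂(μ i) := by
  induction k with
  | zero => simp
  | succ k ih =>
    rw [lint_pi_succ _ _ (by fun_prop)]
    simp only [Fin.prod_univ_succ, Fin.cons_zero, Fin.cons_succ]
    have : ∀ x, ∫⁻ y : Fin k → E, f 0 x * ∏ i, f i.succ (y i) ∂(Measure.pi fun i => μ i.succ)
        = f 0 x * ∏ i : Fin k, ∫⁻ x, f i.succ x ∂(μ i.succ) := by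
      intro x
      rw [lintegral_const_mul _ (by fun_prop), ih (fun i => μ i.succ) (fun i => f i.succ) (fun i => hf _)]
    simp_rw [this]
    rw [lintegral_mul_const _ (hf 0)]

lemma lint_half {θ R : ℝ} (hθ : θ < 1) (hR : 0 < R) :
    ∫⁻ t in Ioc 0 R, ‖t‖ₑ ^ (-θ) = ENNReal.ofReal (R^(1-θ)/(1-θ)) := by
  have h1 : ∫⁻ t in Ioc 0 R, ‖t‖ₑ ^ (-θ) = ∫⁻ t in Ioc 0 R, ENNReal.ofReal (t ^ (-θ)) := by
    apply setLIntegral_congr_fun measurableSet_Ioc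
    intro t ht
    simp only
    rw [← ofReal_norm, Real.norm_of_nonneg ht.1.le, ENNReal.ofReal_rpow_of_pos ht.1]
  rw [h1]
  have hi : IntervalIntegrable (fun t : ℝ => t ^ (-θ)) volume 0 R :=
    intervalIntegral.intervalIntegrable_rpow' (by linarith)
  rw [intervalIntegrable_iff_integrableOn_Ioc_of_le hR.le] at hi
  rw [← ofReal_integral_eq_lintegral_ofReal hi]
  · congr 1
    rw [← intervalIntegral.integral_of_le hR.le, integral_rpow (Or.inl (by linarith))]
    have : -θ + 1 ≠ 0 := by linarith
    rw [Real.zero_rpow this]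
    ring_nf
  · filter_upwards [ae_restrict_mem measurableSet_Ioc] with t ht
    exact Real.rpow_nonneg ht.1.le _

lemma lint_sym {θ R : ℝ} (hθ : θ < 1) (hR : 0 < R) :
    ∫⁻ t in Icc (-R) R, ‖t‖ₑ ^ (-θ) ≤ 2 * ENNReal.ofReal (R^(1-θ)/(1-θ)) := by
  have hsub : Icc (-R) R ⊆ (Ioc 0 R) ∪ ({0} ∪ Neg.neg ⁻¹' (Ioc 0 R)) := by
    intro t ht
    rcases lt_trichotomy t 0 with h | h | h
    · right; right; exact ⟨by simpa using h, by linarith [ht.1]⟩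
    · right; left; exact h
    · left; exact ⟨h, ht.2⟩
  refine (lintegral_mono_set hsub).trans ?_
  refine (lintegral_union_le _ _ _).trans ?_
  rw [two_mul, lint_half hθ hR]
  gcongr
  refine (lintegral_union_le _ _ _).trans ?_
  have h2 : ∫⁻ t in Neg.neg ⁻¹' (Ioc 0 R), ‖t‖ₑ ^ (-θ) = ∫⁻ t in Ioc 0 R, ‖t‖ₑ ^ (-θ) := by
    have := (Measure.measurePreserving_neg (volume : Measure ℝ)).setLIntegral_comp_preimage (s := Ioc 0 R)
      measurableSet_Ioc (f := fun t => ‖t‖ₑ ^ (-θ)) (by fun_prop)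
    simpa using this
  rw [h2, lint_half hθ hR]
  simp

lemma lint_1d {θ R : ℝ} (h0 : 0 ≤ θ) (hθ : θ < 1) (hR : 0 < R) (p z : ℝ) :
    ∫⁻ t in Metric.closedBall p R, ‖z - t‖ₑ ^ (-θ) ≤
      ENNReal.ofReal ((2 + 2/(1-θ)) * R^(1-θ)) := by
  have h1 : ∀ t, ‖z - t‖ₑ ^ (-θ) ≤ ENNReal.ofReal (R ^ (-θ)) +
      (Icc (-R) R).indicator (fun s => ‖s‖ₑ ^ (-θ)) (z - t) := by
    intro t
    by_cases h : z - t ∈ Icc (-R) R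
    · rw [indicator_of_mem h]; exact le_add_self
    · rw [indicator_of_notMem h, add_zero]
      rw [← ENNReal.ofReal_rpow_of_pos hR]
      rw [ENNReal.rpow_neg, ENNReal.rpow_neg, ENNReal.inv_le_inv]
      apply ENNReal.rpow_le_rpow _ h0
      rw [← ofReal_norm]
      apply ENNReal.ofReal_le_ofReal
      rw [Real.norm_eq_abs]
      by_contra h2
      push Not at h2
      exact h ⟨(abs_lt.1 h2).1.le, (abs_lt.1 h2).2.le⟩
  refine (lintegral_mono h1).trans ?_
  rw [lintegral_add_left measurable_const]
  have h2 : ∫⁻ t in Metric.closedBall p R, (Icc (-R) R).indicator (fun s => ‖s‖ₑ ^ (-θ)) (z - t)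
      ≤ 2 * ENNReal.ofReal (R^(1-θ)/(1-θ)) := by
    refine (setLIntegral_le_lintegral _ _).trans ?_
    rw [lintegral_sub_left_eq_self (fun t => (Icc (-R) R).indicator (fun s => ‖s‖ₑ ^ (-θ)) t) z]
    rw [lintegral_indicator measurableSet_Icc]
    exact lint_sym hθ hR
  refine (add_le_add_right h2 _).trans ?_
  rw [setLIntegral_const, Real.volume_closedBall]
  have h3 : (2:ℝ≥0∞) = ENNReal.ofReal 2 := by simp
  have h4 : 0 < 1 - θ := by linarith
  rw [h3, ← ENNReal.ofReal_mul (by positivity), ← ENNReal.ofReal_mul (by positivity),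
    ← ENNReal.ofReal_add (by positivity) (by positivity)]
  apply ENNReal.ofReal_le_ofReal
  have h5 : R ^ (1-θ) = R ^ (-θ) * R := by
    rw [show (1-θ) = -θ + 1 by ring, Real.rpow_add hR, Real.rpow_one]
  rw [h5]
  apply le_of_eq; ring

lemma one_le_jap {n : ℕ} (x : Euc n) : 1 ≤ jap x := by
  unfold jap
  rw [Real.one_le_sqrt]
  nlinarith [sq_nonneg ‖x‖]

lemma jap_pos {n : ℕ} (x : Euc n) : 0 < jap x := zero_lt_one.trans_le (one_le_jap x)

lemma norm_le_jap {n : ℕ} (x : Euc n) : ‖x‖ ≤ jap x := by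
  unfold jap
  apply Real.le_sqrt_of_sq_le
  linarith

lemma jap_cont {n : ℕ} : Continuous (jap : Euc n → ℝ) := by
  unfold jap; fun_prop

lemma jap_kernel {m : ℕ} (hm : 0 < m) {b : ℝ} (hb : 0 ≤ b) (a : Fin (m+1)) (x : Euc (m+1)) :
    ENNReal.ofReal (jap x ^ (-(2*b))) ≤ ∏ i, ‖prj a x i‖ₑ ^ (-(2*b/m)) := by
  have h1 : ENNReal.ofReal (jap x ^ (-(2*b))) = ∏ i : Fin m, (ENNReal.ofReal (jap x)) ^ (-(2*b/m)) := by
    rw [Finset.prod_const, Finset.card_univ, Fintype.card_fin, ← ENNReal.rpow_natCast,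
      ← ENNReal.rpow_mul, ENNReal.ofReal_rpow_of_pos (jap_pos x)]
    congr 2
    have : (m:ℝ) ≠ 0 := by positivity
    field_simp
  rw [h1]
  apply Finset.prod_le_prod' 
  intro i _
  rw [ENNReal.rpow_neg, ENNReal.rpow_neg, ENNReal.inv_le_inv]
  apply ENNReal.rpow_le_rpow _ (by positivity)
  rw [← ofReal_norm]
  apply ENNReal.ofReal_le_ofReal
  exact (PiLp.norm_apply_le x _).trans (norm_le_jap x)

lemma kernel_bound {m : ℕ} (hm : 0 < m) {b : ℝ} (hb : 0 ≤ b) (hb2 : 2*b < m) :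
    ∃ C : ℝ, 0 < C ∧ ∀ (c : Euc (m+1)) (R : ℝ), 0 < R → ∀ ζ : Euc (m+1),
      ∫⁻ x in Metric.sphere c R, ENNReal.ofReal (jap (ζ - x) ^ (-(2*b))) ∂(Measure.hausdorffMeasure (m:ℝ))
        ≤ ENNReal.ofReal (C * R ^ ((m:ℝ) - 2*b)) := by
  set θ := 2*b/m with hθ
  have hm' : (0:ℝ) < m := by exact_mod_cast hm
  have hθ0 : 0 ≤ θ := by positivity
  have hθ1 : θ < 1 := by rw [hθ, div_lt_one hm']; exact hb2
  have hθ2 : 0 < 1 - θ := by linarith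
  refine ⟨((KK m).toReal + 1) * ((m+1) * (2 + 2/(1-θ))^m), by positivity, ?_⟩
  intro c R hR ζ
  refine (sphere_lint c hR _ (fun a y => ∏ i, ‖prj a ζ i - y i‖ₑ ^ (-θ)) (fun a => by fun_prop) ?_).trans ?_
  · intro a x
    exact jap_kernel hm hb a (ζ - x)
  have h1 : ∀ a : Fin (m+1), ∫⁻ y in Metric.closedBall (prj a c) R, ∏ i, ‖prj a ζ i - y i‖ₑ ^ (-θ) ≤
      ENNReal.ofReal ((2 + 2/(1-θ))^m * R ^ ((m:ℝ) - 2*b)) := by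
    intro a
    rw [closedBall_pi _ hR.le, volume_pi, Measure.restrict_pi_pi]
    rw [lint_pi_prod _ (fun i t => ‖prj a ζ i - t‖ₑ ^ (-θ)) (fun i => by fun_prop)]
    refine (Finset.prod_le_prod' (fun i _ => lint_1d hθ0 hθ1 hR _ _)).trans ?_
    rw [Finset.prod_const, Finset.card_univ, Fintype.card_fin, ← ENNReal.ofReal_pow (by positivity), mul_pow,
      ← Real.rpow_natCast (R ^ (1-θ)), ← Real.rpow_mul hR.le]
    apply le_of_eq
    congr 3
    rw [hθ]; field_simp
  refine (mul_le_mul_right (Finset.sum_le_sum (fun a _ => h1 a)) _).trans ?_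
  rw [Finset.sum_const, Finset.card_univ, Fintype.card_fin, nsmul_eq_mul]
  have h2 : KK m ≤ ENNReal.ofReal ((KK m).toReal + 1) := by
    refine ENNReal.le_ofReal_iff_toReal_le (KK_ne_top m) (by positivity) |>.2 (by linarith)
  refine (mul_le_mul_left h2 _).trans ?_
  rw [show ((m+1 : ℕ) : ℝ≥0∞) = ENNReal.ofReal ((m:ℝ)+1) by rw [← ENNReal.ofReal_natCast]; push_cast; rfl]
  rw [← ENNReal.ofReal_mul (by positivity), ← ENNReal.ofReal_mul (by positivity)]
  apply le_of_eq
  congr 1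
  ring
open scoped Topology LineDeriv

lemma cd_zero {n k : ℕ} (z x : Euc n) (ξ : Fin k → Euc n) :
    chainDiff (k+1) z (Fin.cons x ξ) 0 = z - x := by
  simp [chainDiff]

lemma cd_succ {n k : ℕ} (z x : Euc n) (ξ : Fin k → Euc n) (i : Fin (k+1)) :
    chainDiff (k+1) z (Fin.cons x ξ) i.succ = chainDiff k x ξ i := by
  unfold chainDiff
  congr 1
  · simp only [Fin.val_succ, Nat.add_eq_zero_iff, one_ne_zero, and_false, dite_false, Nat.add_sub_cancel]
    split_ifs with h
    · have : (⟨(i:ℕ), by have := i.isLt; omega⟩ : Fin (k+1)) = 0 := by ext; simp [h]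
      rw [this, Fin.cons_zero]
    · have : (⟨(i:ℕ), by have := i.isLt; omega⟩ : Fin (k+1)) = Fin.succ ⟨(i:ℕ)-1, by have := i.isLt; omega⟩ := by
        ext; simp; omega
      rw [this, Fin.cons_succ]
  · by_cases h : (i:ℕ) < k
    · have h' : ((i.succ : Fin (k+2)) : ℕ) < k + 1 := by simp [h]
      rw [dif_pos h, dif_pos h']
      have : (⟨((i.succ : Fin (k+2)):ℕ), h'⟩ : Fin (k+1)) = Fin.succ ⟨(i:ℕ), h⟩ := by
        ext; simp
      rw [this, Fin.cons_succ]
    · have h' : ¬ ((i.succ : Fin (k+2)) : ℕ) < k + 1 := by simpa using h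
      rw [dif_neg h, dif_neg h']

lemma cd_base {n : ℕ} (z : Euc n) (ξ : Fin 0 → Euc n) (i : Fin 1) : chainDiff 0 z ξ i = z := by
  have : i = 0 := Subsingleton.elim _ _
  subst this
  simp [chainDiff]

lemma cd_cont {n k : ℕ} (z : Euc n) (i : Fin (k+1)) : Continuous fun ξ : Fin k → Euc n => chainDiff k z ξ i := by
  unfold chainDiff
  split_ifs <;> fun_prop

lemma cd_indep {n k : ℕ} (z z' : Euc n) (ξ : Fin k → Euc n) (i : Fin (k+1)) (hi : i ≠ 0) :
    chainDiff k z ξ i = chainDiff k z' ξ i := by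
  have : (i:ℕ) ≠ 0 := fun h => hi (by ext; simpa using h)
  simp [chainDiff, this]

lemma cd_first {n k : ℕ} (z : Euc n) (ξ : Fin k → Euc n) :
    chainDiff k z ξ 0 = z - (0 - chainDiff k 0 ξ 0) := by
  simp [chainDiff]

lemma chain_excl {n k : ℕ} (h : Euc n → ℝ≥0∞) (hh : Measurable h) (heven : ∀ x, h (-x) = h x)
    (μ : Fin k → Measure (Euc n)) [∀ i, SigmaFinite (μ i)] (A : Fin k → ℝ≥0∞)
    (hA : ∀ i ζ, ∫⁻ x, h (ζ - x) ∂(μ i) ≤ A i) (z : Euc n) (l : Fin (k+1)) :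
    ∫⁻ ξ, ∏ i, (if i = l then 1 else h (chainDiff k z ξ i)) ∂(Measure.pi μ) ≤ ∏ i, A i := by
  induction k generalizing z with
  | zero =>
    have : ∀ i : Fin 1, i = l := fun i => Subsingleton.elim _ _
    simp [this]
  | succ k ih =>
    have hmeas : ∀ (k : ℕ) (z : Euc n) (l : Fin (k+1)), Measurable fun ξ : Fin k → Euc n => 
        ∏ i, (if i = l then 1 else h (chainDiff k z ξ i)) := by
      intro k z l
      apply Finset.measurable_prod
      intro i _
      split_ifs
      · exact measurable_const
      · exact hh.comp (cd_cont z i).measurable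
    refine Fin.cases ?_ (fun l' => ?_) l
    · rw [lint_pi_succ' _ _ (hmeas _ _ _), Fin.prod_univ_succ]
      simp only [Fin.prod_univ_succ, if_true, one_mul, Fin.succ_ne_zero, if_false, cd_succ]
      have e : ∀ y : Fin k → Euc n, ∫⁻ x, h (chainDiff k x y 0) * ∏ i : Fin k, h (chainDiff k x y i.succ) ∂(μ 0)
          ≤ A 0 * ∏ i, (if i = 0 then 1 else h (chainDiff k 0 y i)) := by
        intro y
        rw [Fin.prod_univ_succ]
        simp only [if_true, one_mul, Fin.succ_ne_zero, if_false]
        have : ∀ x, h (chainDiff k x y 0) * ∏ i : Fin k, h (chainDiff k x y i.succ) =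
            h ((0 - chainDiff k 0 y 0) - x) * ∏ i : Fin k, h (chainDiff k 0 y i.succ) := by
          intro x
          have e0 : chainDiff k x y 0 = -((0 - chainDiff k 0 y 0) - x) := by
            rw [cd_first x]; abel
          have e1 : ∏ i : Fin k, h (chainDiff k x y i.succ) = ∏ i : Fin k, h (chainDiff k 0 y i.succ) := by
            apply Finset.prod_congr rfl
            intro i _
            rw [cd_indep x 0 y _ (Fin.succ_ne_zero i)]
          rw [e0, heven, e1]
        simp_rw [this]
        rw [lintegral_mul_const _ (by fun_prop)]
        gcongr
        exact hA 0 _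
      refine (lintegral_mono e).trans ?_
      rw [lintegral_const_mul _ (hmeas _ _ _)]
      gcongr
      exact ih (fun i => μ i.succ) (fun i => A i.succ) (fun i => hA i.succ) 0 0
    · rw [lint_pi_succ _ _ (hmeas _ _ _), Fin.prod_univ_succ]
      have e : ∀ x, ∫⁻ y, ∏ i, (if i = l'.succ then 1 else h (chainDiff (k+1) z (Fin.cons x y) i)) ∂(Measure.pi fun i => μ i.succ)
          ≤ h (z - x) * ∏ i : Fin k, A i.succ := by
        intro x
        simp only [Fin.prod_univ_succ (n := k+1), (Fin.succ_ne_zero l').symm, if_false, cd_zero, cd_succ, Fin.succ_inj]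
        rw [lintegral_const_mul _ (hmeas _ _ _)]
        gcongr
        exact ih (fun i => μ i.succ) (fun i => A i.succ) (fun i => hA i.succ) x l'
      refine (lintegral_mono e).trans ?_
      rw [lintegral_mul_const _ (by fun_prop)]
      gcongr
      exact hA 0 _

/-- iterated convolution -/
def Vc {n : ℕ} : (k : ℕ) → (Fin (k+1) → Euc n → ℝ≥0∞) → Euc n → ℝ≥0∞
  | 0, F => F 0
  | k+1, F => fun z => ∫⁻ x, F 0 (z - x) * Vc k (fun i => F i.succ) x

lemma Vc_meas {n k : ℕ} (F : Fin (k+1) → Euc n → ℝ≥0∞) (hF : ∀ i, Measurable (F i)) :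
    Measurable (Vc k F) := by
  induction k with
  | zero => exact hF 0
  | succ k ih =>
    have := ih (fun i => F i.succ) (fun i => hF _)
    have h0 := hF 0
    simp only [Vc]
    apply Measurable.lintegral_prod_right (f := fun z x => F 0 (z - x) * Vc k (fun i => F i.succ) x)
    simp only [Function.uncurry_def]
    fun_prop

lemma Vc_int {n k : ℕ} (F : Fin (k+1) → Euc n → ℝ≥0∞) (hF : ∀ i, Measurable (F i)) :
    ∫⁻ z, Vc k F z = ∏ i, ∫⁻ x, F i x := by
  induction k with
  | zero => simp [Vc]
  | succ k ih =>
    have h1 := Vc_meas (fun i => F i.succ) (fun i => hF _)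
    have h0 := hF 0
    simp only [Vc]
    rw [lintegral_lintegral_swap (by simp only [Function.uncurry_def]; fun_prop), Fin.prod_univ_succ]
    have : ∀ x, ∫⁻ z, F 0 (z - x) * Vc k (fun i => F i.succ) x = (∫⁻ z, F 0 z) * Vc k (fun i => F i.succ) x := by
      intro x
      rw [lintegral_mul_const _ (by fun_prop), lintegral_sub_right_eq_self (F 0) x]
    simp_rw [this]
    rw [lintegral_const_mul _ h1, ih _ (fun i => hF _)]

abbrev Sch (n : ℕ) := SchwartzMap (Euc n) ℂ

def dd {n : ℕ} (a : Fin n) (g : Sch n) : Sch n := ∂_{EuclideanSpace.single a (1:ℝ)} g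

def N1 {n : ℕ} (g : Sch n) (x : Euc n) : ℝ≥0∞ := ‖g x‖ₑ^2 + ∑ a, ‖dd a g x‖ₑ^2

def N2 {n : ℕ} (g : Sch n) (x : Euc n) : ℝ≥0∞ := N1 g x + ∑ a, N1 (dd a g) x

lemma N1_meas {n : ℕ} (g : Sch n) : Measurable (N1 g) := by
  have : ∀ g : Sch n, Measurable g := fun g => g.continuous.measurable
  unfold N1
  have h1 := this g
  have h2 := fun a => this (dd a g)
  fun_prop

lemma N2_meas {n : ℕ} (g : Sch n) : Measurable (N2 g) := by
  exact (N1_meas g).add (Finset.measurable_fun_sum _ fun a _ => N1_meas (dd a g))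

def TP {n : ℕ} (μ : Measure (Euc n)) (K : ℝ≥0∞) : Prop := ∀ (g h : Sch n) (z y : Euc n),
  ∫⁻ x, ‖g (z - x)‖ₑ^2 * ‖h (x - y)‖ₑ^2 ∂μ ≤ K * ∫⁻ x, N1 g (z - x) * N1 h (x - y)

lemma TP2 {n : ℕ} {μ : Measure (Euc n)} {K : ℝ≥0∞} (H : TP μ K) (g h : Sch n) (z y : Euc n) :
    ∫⁻ x, ‖g (z - x)‖ₑ^2 * N1 h (x - y) ∂μ ≤ K * ∫⁻ x, N1 g (z - x) * N2 h (x - y) := by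
  have hm : ∀ g : Sch n, Measurable g := fun g => g.continuous.measurable
  have h1 := hm g
  have h2 := hm h
  have h3 := fun a => hm (dd a h)
  have h4 := N1_meas g
  have h5 := N1_meas h
  have h6 := fun a => N1_meas (dd a h)
  have e1 : ∀ x, ‖g (z - x)‖ₑ^2 * N1 h (x - y) = ‖g (z - x)‖ₑ^2 * ‖h (x - y)‖ₑ^2 +
      ∑ a, ‖g (z - x)‖ₑ^2 * ‖dd a h (x - y)‖ₑ^2 := by
    intro x; rw [N1, mul_add, Finset.mul_sum]
  have e2 : ∀ x, N1 g (z - x) * N2 h (x - y) = N1 g (z - x) * N1 h (x - y) +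
      ∑ a, N1 g (z - x) * N1 (dd a h) (x - y) := by
    intro x; rw [N2, mul_add, Finset.mul_sum]
  simp_rw [e1, e2]
  have m1 : Measurable fun x => z - x := measurable_const.sub measurable_id
  have m2 : Measurable fun x => x - y := measurable_id.sub measurable_const
  have q1 : Measurable fun x => ‖g (z - x)‖ₑ^2 := (h1.comp m1).enorm.pow_const 2
  have q2 : ∀ h : Sch n, Measurable fun x => ‖h (x - y)‖ₑ^2 := fun h => ((hm h).comp m2).enorm.pow_const 2
  have q3 : Measurable fun x => N1 g (z - x) := h4.comp m1
  have q4 : ∀ h : Sch n, Measurable fun x => N1 h (x - y) := fun h => (N1_meas h).comp m2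
  have q5 : ∀ h : Sch n, Measurable fun x => ‖g (z - x)‖ₑ^2 * ‖h (x - y)‖ₑ^2 := fun h => q1.mul (q2 h)
  have q6 : ∀ h : Sch n, Measurable fun x => N1 g (z - x) * N1 h (x - y) := fun h => q3.mul (q4 h)
  rw [lintegral_add_left (q5 h), lintegral_add_left (q6 h),
    lintegral_finsetSum _ (fun a _ => q5 (dd a h)), lintegral_finsetSum _ (fun a _ => q6 (dd a h)),
    mul_add, Finset.mul_sum]
  gcongr with a
  · exact H g h z y
  · exact H g (dd a h) z y

lemma TP_step {n k : ℕ} {μ : Measure (Euc n)} [SFinite μ] {K : ℝ≥0∞} (H : TP μ K) (g h : Sch n)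
    (F : Fin k → Euc n → ℝ≥0∞) (hF : ∀ i, Measurable (F i)) (z : Euc n) :
    ∫⁻ x, ‖g (z - x)‖ₑ^2 * Vc k (Fin.cons (N1 h) F) x ∂μ ≤
      K * ∫⁻ x, N1 g (z - x) * Vc k (Fin.cons (N2 h) F) x := by
  cases k with
  | zero => simpa [Vc] using TP2 H g h z 0
  | succ k =>
    simp only [Vc, Fin.cons_zero, Fin.cons_succ]
    have hV := Vc_meas (k := k) (fun i => F i) hF
    set V := Vc k (fun i => F i) with hVdef
    have h1 : Measurable g := g.continuous.measurable
    have h4 := N1_meas g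
    have h5 := N1_meas h
    have h6 := N2_meas h
    have e1 : ∀ x, ‖g (z - x)‖ₑ^2 * ∫⁻ y, N1 h (x - y) * V y = ∫⁻ y, ‖g (z - x)‖ₑ^2 * N1 h (x - y) * V y := by
      intro x
      rw [← lintegral_const_mul _ (by fun_prop)]
      simp_rw [mul_assoc]
    have e2 : ∀ x, N1 g (z - x) * ∫⁻ y, N2 h (x - y) * V y = ∫⁻ y, N1 g (z - x) * N2 h (x - y) * V y := by
      intro x
      rw [← lintegral_const_mul _ (by fun_prop)]
      simp_rw [mul_assoc]
    simp_rw [e1, e2]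
    have s1 : ∫⁻ x, ∫⁻ y, ‖g (z - x)‖ₑ^2 * N1 h (x - y) * V y ∂volume ∂μ =
        ∫⁻ y, ∫⁻ x, ‖g (z - x)‖ₑ^2 * N1 h (x - y) * V y ∂μ :=
      lintegral_lintegral_swap (by simp only [Function.uncurry_def]; fun_prop)
    have s2 : ∫⁻ x, ∫⁻ y, N1 g (z - x) * N2 h (x - y) * V y =
        ∫⁻ y, ∫⁻ x, N1 g (z - x) * N2 h (x - y) * V y :=
      lintegral_lintegral_swap (by simp only [Function.uncurry_def]; fun_prop)
    rw [s1, s2, ← lintegral_const_mul _ ?_]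
    · apply lintegral_mono
      intro y
      simp only
      rw [lintegral_mul_const _ (by fun_prop), lintegral_mul_const _ (by fun_prop), ← mul_assoc]
      gcongr
      exact TP2 H g h z y
    · apply Measurable.lintegral_prod_left (f := fun x y => N1 g (z - x) * N2 h (x - y) * V y)
      simp only [Function.uncurry_def]; fun_prop

lemma chain_trace {n k : ℕ} (μ : Fin k → Measure (Euc n)) [∀ i, SigmaFinite (μ i)] {K : ℝ≥0∞} (hK : K ≠ ⊤)
    (H : ∀ i, TP (μ i) K) (g : Fin (k+1) → Sch n) (z : Euc n) :
    ∫⁻ ξ, ∏ i, ‖g i (chainDiff k z ξ i)‖ₑ^2 ∂(Measure.pi μ) ≤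
      K ^ k * Vc k (Fin.cons (N1 (g 0)) (fun i => N2 (g i.succ))) z := by
  have hmeas : ∀ (k : ℕ) (g : Fin (k+1) → Sch n) (z : Euc n), Measurable fun ξ : Fin k → Euc n => 
        ∏ i, ‖g i (chainDiff k z ξ i)‖ₑ^2 := by
      intro k g z
      apply Finset.measurable_prod
      intro i _
      exact (((g i).continuous.comp (cd_cont z i)).measurable.enorm).pow_const 2
  induction k generalizing z with
  | zero => simp [Vc, cd_base, N1]
  | succ k ih =>
    rw [lint_pi_succ _ _ (hmeas _ _ _)]
    have e : ∀ x, ∫⁻ y, ∏ i, ‖g i (chainDiff (k+1) z (Fin.cons x y) i)‖ₑ^2 ∂(Measure.pi fun i => μ i.succ) ≤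
        K ^ k * (‖g 0 (z - x)‖ₑ^2 * Vc k (Fin.cons (N1 (g 1)) (fun i => N2 (g i.succ.succ))) x) := by
      intro x
      simp only [Fin.prod_univ_succ (n := k+1), cd_zero, cd_succ]
      rw [lintegral_const_mul _ (hmeas k (fun i => g i.succ) x), mul_left_comm]
      gcongr
      exact ih (fun i => μ i.succ) (fun i => H i.succ) (fun i => g i.succ) x
    refine (lintegral_mono e).trans ?_
    rw [lintegral_const_mul']
    · rw [pow_succ, mul_assoc]
      gcongr
      refine (TP_step (H 0) (g 0) (g 1) _ (fun i => N2_meas _) z).trans ?_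
      apply le_of_eq
      simp only [Vc, Fin.cons_zero, Fin.cons_succ]
      congr 3
      funext x
      congr 2
      funext i
      refine Fin.cases ?_ (fun j => ?_) i <;> simp
    · exact ENNReal.pow_ne_top hK
open scoped Topology LineDeriv


lemma dd_apply {n : ℕ} (a : Fin n) (g : Sch n) (x : Euc n) :
    dd a g x = fderiv ℝ g x (EuclideanSpace.single a (1:ℝ)) := by
  simp [dd, SchwartzMap.lineDerivOp_apply_eq_fderiv]

lemma sq_add_enorm (A B : ℂ) : ‖A + B‖ₑ^2 ≤ 2 * (‖A‖ₑ^2 + ‖B‖ₑ^2) := by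
  refine (pow_le_pow_left' (enorm_add_le A B) 2).trans ?_
  have := add_sq_le (a := ‖A‖₊) (b := ‖B‖₊)
  simp only [enorm_eq_nnnorm]
  exact_mod_cast this

lemma TP_sphere {m : ℕ} (c : Euc (m+1)) {R : ℝ} (hR : 0 < R) :
    TP ((Measure.hausdorffMeasure (m:ℝ)).restrict (Metric.sphere c R)) (KK m * (((m+1:ℕ):ℝ≥0∞)*2)) := by
  intro g h z y
  have cz : Continuous fun x : Euc (m+1) => z - x := by fun_prop
  have cy : Continuous fun x : Euc (m+1) => x - y := by fun_prop
  have key := trace_ineq c hR (fun x => g (z - x) * h (x - y))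
    (fun a x => -(dd a g (z - x)) * h (x - y) + g (z - x) * dd a h (x - y))
    ((g.continuous.comp cz).mul (h.continuous.comp cy))
    (fun a => ((((dd a g).continuous.comp cz).neg).mul (h.continuous.comp cy)).add
      ((g.continuous.comp cz).mul ((dd a h).continuous.comp cy))) ?_ ?_
  · have e1 : ∀ x, ‖g (z - x) * h (x - y)‖ₑ^2 = ‖g (z - x)‖ₑ^2 * ‖h (x - y)‖ₑ^2 := by
      intro x; rw [enorm_mul, mul_pow]
    simp_rw [e1] at key
    refine key.trans ?_
    rw [mul_assoc]
    gcongr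
    have e2 : ∀ a : Fin (m+1), ∫⁻ x, (‖g (z - x)‖ₑ^2 * ‖h (x - y)‖ₑ^2 +
        ‖-(dd a g (z - x)) * h (x - y) + g (z - x) * dd a h (x - y)‖ₑ^2) ≤
        2 * ∫⁻ x, N1 g (z - x) * N1 h (x - y) := by
      intro a
      rw [← lintegral_const_mul' _ _ (by simp)]
      apply lintegral_mono
      intro x
      simp only
      have b1 : ‖g (z - x)‖ₑ^2 + ‖dd a g (z - x)‖ₑ^2 ≤ N1 g (z - x) := by
        unfold N1; gcongr
        exact Finset.single_le_sum (f := fun a => ‖dd a g (z - x)‖ₑ^2) (fun _ _ => zero_le) (Finset.mem_univ a)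
      have b2 : ‖h (x - y)‖ₑ^2 + ‖dd a h (x - y)‖ₑ^2 ≤ N1 h (x - y) := by
        unfold N1; gcongr
        exact Finset.single_le_sum (f := fun a => ‖dd a h (x - y)‖ₑ^2) (fun _ _ => zero_le) (Finset.mem_univ a)
      refine le_trans ?_ (mul_le_mul_right (mul_le_mul' b1 b2) 2)
      refine (add_le_add le_rfl (sq_add_enorm _ _)).trans ?_
      simp only [enorm_mul, enorm_neg, mul_pow]
      generalize ‖g (z - x)‖ₑ^2 = p
      generalize ‖h (x - y)‖ₑ^2 = q
      generalize ‖dd a g (z - x)‖ₑ^2 = p'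
      generalize ‖dd a h (x - y)‖ₑ^2 = q'
      calc p * q + 2 * (p' * q + p * q') ≤ p * q + 2 * (p' * q + p * q') + (p * q + 2 * (p' * q')) := le_self_add
        _ = 2 * ((p + p') * (q + q')) := by ring
    refine (Finset.sum_le_sum fun a _ => e2 a).trans ?_
    simp [mul_assoc]
  · intro a x t
    set e := EuclideanSpace.single a (1:ℝ) with he
    have d0 : HasDerivAt (fun t : ℝ => x + t • e) e t := by
      simpa using ((hasDerivAt_id t).smul_const e).const_add x
    have dg : HasDerivAt (fun t : ℝ => g (z - (x + t • e))) (-(dd a g (z - (x + t • e)))) t := by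
      have := (g.differentiableAt (x := z - (x + t • e))).hasFDerivAt.comp_hasDerivAt t (d0.const_sub z)
      simpa [dd_apply, Function.comp_def] using this
    have dh : HasDerivAt (fun t : ℝ => h ((x + t • e) - y)) (dd a h ((x + t • e) - y)) t := by
      have := (h.differentiableAt (x := (x + t • e) - y)).hasFDerivAt.comp_hasDerivAt t (d0.sub_const y)
      simpa [dd_apply, Function.comp_def] using this
    exact dg.mul dh
  · have hg : Tendsto (fun x => g (z - x)) (cocompact (Euc (m+1))) (𝓝 0) :=
      (zero_at_infty g).comp (Homeomorph.subLeft z).isClosedEmbedding.tendsto_cocompact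
    have hh : Tendsto (fun x => h (x - y)) (cocompact (Euc (m+1))) (𝓝 0) :=
      (zero_at_infty h).comp (Homeomorph.subRight y).isClosedEmbedding.tendsto_cocompact
    simpa using hg.mul hh

lemma ewaldM_eq {m : ℕ} (r : ℝ) (η : Euc (m+1)) : ewaldM (m+1) r η =
    (Measure.hausdorffMeasure (m:ℝ)).restrict (Metric.sphere ((2 : ℝ)⁻¹ • η) (r * ‖η‖ / 2)) := by
  unfold ewaldM
  congr 2
  push_cast; ring

lemma ewaldM_fin {m : ℕ} (hm : 0 < m) {r : ℝ} (hr : 0 < r) {η : Euc (m+1)} (hη : 0 < ‖η‖) :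
    IsFiniteMeasure (ewaldM (m+1) r η) := by
  obtain ⟨C, hC, H⟩ := kernel_bound (m := m) hm (b := 0) le_rfl (by simpa using hm)
  have := H ((2 : ℝ)⁻¹ • η) (r * ‖η‖ / 2) (by positivity) 0
  rw [ewaldM_eq]
  constructor
  simp at this
  simpa using this.trans_lt ENNReal.ofReal_lt_top
open scoped Topology LineDeriv FourierTransform


lemma planch {n : ℕ} (H : Sch n) : ∫⁻ x, ‖(𝓕 H : Sch n) x‖ₑ^2 = ∫⁻ x, ‖H x‖ₑ^2 := by
  have key : ∀ g : Sch n, ∫⁻ x, ‖g x‖ₑ^2 = ENNReal.ofReal (∫ x, ‖g x‖^2) := by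
    intro g
    have hi : Integrable (fun x => ‖g x‖^2) volume := by
      have := (g.memLp 2 volume).integrable_norm_pow (by norm_num)
      simpa using this
    rw [ofReal_integral_eq_lintegral_ofReal hi
      (Eventually.of_forall fun x => by positivity)]
    congr 1; funext x
    rw [ENNReal.ofReal_pow (norm_nonneg _), ofReal_norm]
  rw [key, key, SchwartzMap.integral_norm_sq_fourier]

def Mx {n : ℕ} (a : Fin n) (H : Sch n) : Sch n :=
  -(2 * (Real.pi:ℂ) * Complex.I) • SchwartzMap.smulLeftCLM ℂ (fun x : Euc n => inner ℝ x (EuclideanSpace.single a (1:ℝ))) H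

lemma dd_four {n : ℕ} (a : Fin n) (H : Sch n) : dd a (𝓕 H) = 𝓕 (Mx a H) := by
  unfold dd Mx
  exact SchwartzMap.lineDerivOp_fourier_eq H _

lemma Mx_le {n : ℕ} (a : Fin n) (H : Sch n) (x : Euc n) :
    ‖Mx a H x‖ₑ ≤ ENNReal.ofReal (2 * Real.pi * jap x) * ‖H x‖ₑ := by
  have : (fun x : Euc n => inner ℝ x (EuclideanSpace.single a (1:ℝ))).HasTemperateGrowth := by fun_prop
  have e : Mx a H x = (-(2 * (Real.pi:ℂ) * Complex.I)) * (((x a : ℝ):ℂ) * H x) := by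
    rw [Mx, smul_apply, SchwartzMap.smulLeftCLM_apply_apply this, EuclideanSpace.inner_single_right]
    simp
  rw [← ofReal_norm, ← ofReal_norm (H x), ← ENNReal.ofReal_mul (by have := jap_pos x; positivity), e]
  apply ENNReal.ofReal_le_ofReal
  simp only [norm_mul, norm_neg, Complex.norm_real, Complex.norm_I, Complex.norm_ofNat, Real.norm_eq_abs, mul_one,
    abs_of_pos Real.pi_pos]
  have : |x a| ≤ jap x := (PiLp.norm_apply_le x a).trans (norm_le_jap x)
  rw [← mul_assoc]
  gcongr

lemma N2_four {n : ℕ} (H : Sch n) : ∫⁻ x, N2 (𝓕 H) x ≤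
    ((1 + n) * (1 + n) * ENNReal.ofReal (2 * Real.pi)^4) * ∫⁻ x, ENNReal.ofReal (jap x)^4 * ‖H x‖ₑ^2 := by
  have hm : ∀ g : Sch n, Measurable (fun x => ‖g x‖ₑ^2) := fun g => g.continuous.measurable.enorm.pow_const 2
  have e1 : ∀ H : Sch n, ∫⁻ x, N1 (𝓕 H) x = (∫⁻ x, ‖H x‖ₑ^2) + ∑ a, (∫⁻ x, ‖Mx a H x‖ₑ^2) := by
    intro H
    unfold N1
    rw [lintegral_add_left (hm _), lintegral_finsetSum _ (fun a _ => hm _), planch]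
    congr 1
    refine Finset.sum_congr rfl fun a _ => ?_
    rw [dd_four, planch]
  have e2 : ∫⁻ x, N2 (𝓕 H) x = (∫⁻ x, ‖H x‖ₑ^2) + ∑ a, (∫⁻ x, ‖Mx a H x‖ₑ^2) +
      ∑ a, ((∫⁻ x, ‖Mx a H x‖ₑ^2) + ∑ b, ∫⁻ x, ‖Mx b (Mx a H) x‖ₑ^2) := by
    unfold N2
    rw [lintegral_add_left (N1_meas _), lintegral_finsetSum _ (fun a _ => N1_meas _), e1]
    congr 1
    refine Finset.sum_congr rfl fun a _ => ?_
    rw [dd_four, e1]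
  rw [e2]
  set D := ENNReal.ofReal (2 * Real.pi) with hD
  set T := D^4 * ∫⁻ x : Euc n, ENNReal.ofReal (jap x)^4 * ‖H x‖ₑ^2 with hT
  have hD1 : 1 ≤ D := by
    rw [hD, ENNReal.one_le_ofReal]; have := Real.pi_gt_three; linarith
  have hJ1 : ∀ x : Euc n, 1 ≤ ENNReal.ofReal (jap x) := fun x => by
    rw [ENNReal.one_le_ofReal]; exact one_le_jap x
  have hMx : ∀ (a : Fin n) (H : Sch n) x, ‖Mx a H x‖ₑ ≤ (D * ENNReal.ofReal (jap x)) * ‖H x‖ₑ := by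
    intro a H x
    rw [hD, ← ENNReal.ofReal_mul (by positivity)]
    exact Mx_le a H x
  have hTT : T = ∫⁻ x : Euc n, (D * ENNReal.ofReal (jap x))^4 * ‖H x‖ₑ^2 := by
    rw [hT, ← lintegral_const_mul' _ _ (by rw [hD]; finiteness)]
    congr 1; funext x; ring
  have hDJ : ∀ x : Euc n, 1 ≤ D * ENNReal.ofReal (jap x) := fun x => one_le_mul hD1 (hJ1 x)
  have t0 : ∫⁻ x, ‖H x‖ₑ^2 ≤ T := by
    rw [hTT]
    apply lintegral_mono; intro x
    simp only
    exact le_mul_of_one_le_left' (one_le_pow₀ (hDJ x))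
  have t1 : ∀ a, ∫⁻ x, ‖Mx a H x‖ₑ^2 ≤ T := by
    intro a
    rw [hTT]
    apply lintegral_mono; intro x
    simp only
    refine (pow_le_pow_left' (hMx a H x) 2).trans ?_
    rw [mul_pow]
    gcongr
    · exact hDJ x
    · norm_num
  have t2 : ∀ a b, ∫⁻ x, ‖Mx b (Mx a H) x‖ₑ^2 ≤ T := by
    intro a b
    rw [hTT]
    apply lintegral_mono; intro x
    simp only
    refine (pow_le_pow_left' ((hMx b _ x).trans (mul_le_mul_right (hMx a H x) _)) 2).trans ?_
    apply le_of_eq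
    ring
  calc _ ≤ T + ∑ a : Fin n, T + ∑ a : Fin n, (T + ∑ b : Fin n, T) := by
        gcongr with a _ a _ b _
        · exact t1 a
        · exact t1 a
        · exact t2 a b
    _ = _ := by simp [hT]; ring

lemma scale_lint {n : ℕ} {r : ℝ} (hr : 0 < r) (F : Euc n → ℝ≥0∞) (hF : Measurable F) :
    ∫⁻ x, F x = ENNReal.ofReal (r^n) * ∫⁻ x, F (r • x) := by
  have h := lintegral_map (μ := (volume : Measure (Euc n))) hF (measurable_const_smul r)
  rw [Measure.map_addHaar_smul _ hr.ne', lintegral_smul_measure] at h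
  rw [← h, smul_eq_mul, ← mul_assoc, ← ENNReal.ofReal_mul (by positivity)]
  simp only [finrank_euclideanSpace_fin]
  rw [abs_of_pos (by positivity), mul_inv_cancel₀ (by positivity)]
  simp

lemma ft_eq {n : ℕ} (f : Sch n) (ξ : Euc n) : ft f ξ = (𝓕 f : Sch n) ((2*Real.pi)⁻¹ • ξ) := by
  rw [SchwartzMap.fourier_coe, Real.fourier_eq', ft]
  congr 1; funext x
  rw [smul_eq_mul]
  congr 2
  rw [inner_smul_right, real_inner_comm]
  push_cast
  have : (Real.pi:ℂ) ≠ 0 := by exact_mod_cast Real.pi_ne_zero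
  field_simp

def scl (n : ℕ) : Euc n ≃L[ℝ] Euc n := ContinuousLinearEquiv.smulLeft
  (Units.mk0 ((2*Real.pi)⁻¹ : ℝ) (by have := Real.pi_pos; positivity))

lemma scl_apply {n : ℕ} (x : Euc n) : scl n x = (2*Real.pi)⁻¹ • x := rfl

def GG {n : ℕ} (β : ℝ) (f : Sch n) : Sch n :=
  SchwartzMap.smulLeftCLM ℂ (fun x : Euc n => (((1 + ‖x‖^2)^(β/2) : ℝ)))
    (SchwartzMap.compCLMOfContinuousLinearEquiv ℂ (scl n) (𝓕 f))

lemma jap_rpow {n : ℕ} (β : ℝ) (x : Euc n) : jap x ^ β = (1 + ‖x‖^2)^(β/2) := by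
  rw [jap, Real.sqrt_eq_rpow, ← Real.rpow_mul (by positivity)]
  congr 1; ring

lemma GG_apply {n : ℕ} (β : ℝ) (f : Sch n) (ξ : Euc n) :
    GG β f ξ = ((jap ξ ^ β : ℝ) : ℂ) * ft f ξ := by
  rw [GG, SchwartzMap.smulLeftCLM_apply_apply (Function.hasTemperateGrowth_one_add_norm_sq_rpow _ _)]
  rw [SchwartzMap.compCLMOfContinuousLinearEquiv_apply, Function.comp_apply, scl_apply, ft_eq, jap_rpow]
  simp

lemma bessel_eq {n : ℕ} (β : ℝ) (f : Sch n) (x : Euc n) :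
    besselD β f x = (((2 * Real.pi) ^ n : ℝ)⁻¹ : ℝ) • (𝓕⁻ (GG β f) : Sch n) ((2*Real.pi)⁻¹ • x) := by
  rw [SchwartzMap.fourierInv_coe, Real.fourierInv_eq', besselD]
  congr 2; funext ξ
  rw [GG_apply, smul_eq_mul]
  congr 2
  rw [inner_smul_right]
  push_cast
  have : (Real.pi:ℂ) ≠ 0 := by exact_mod_cast Real.pi_ne_zero
  field_simp

lemma sob_bound (n : ℕ) (β : ℝ) : ∃ C : ℝ≥0∞, C ≠ ⊤ ∧ ∀ f : Sch n,
    ∫⁻ x, N2 (GG β f) x ≤ C * wSobNorm β 2 f ^ 2 := by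
  have hπ := Real.pi_pos
  refine ⟨((1 + n) * (1 + n) * ENNReal.ofReal (2 * Real.pi)^4) * ENNReal.ofReal ((2 * Real.pi)^n), by finiteness, fun f => ?_⟩
  set H : Sch n := 𝓕⁻ (GG β f) with hH
  have hG : GG β f = 𝓕 H := by rw [hH]; simp
  rw [hG]
  refine (N2_four H).trans ?_
  rw [mul_assoc _ (ENNReal.ofReal ((2 * Real.pi)^n))]
  gcongr
  have hm : Measurable fun x : Euc n => ‖(jap x ^ (2:ℝ) : ℝ) • besselD β f x‖ₑ^2 := by
    simp_rw [bessel_eq]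
    apply Measurable.pow_const
    apply Measurable.enorm
    have := jap_cont (n := n)
    have hc : Continuous fun x : Euc n => (𝓕⁻ (GG β f) : Sch n) ((2*Real.pi)⁻¹ • x) :=
      (𝓕⁻ (GG β f) : Sch n).continuous.comp (continuous_const_smul _)
    have h2 : Continuous fun x : Euc n => (((2 * Real.pi) ^ n : ℝ)⁻¹ : ℝ) • (𝓕⁻ (GG β f) : Sch n) ((2*Real.pi)⁻¹ • x) :=
      (continuous_const_smul (((2 * Real.pi) ^ n : ℝ)⁻¹ : ℝ)).comp hc
    exact (this.measurable.pow_const _).smul h2.measurable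
  have e : wSobNorm β 2 f ^ 2 = ∫⁻ x : Euc n, ‖(jap x ^ (2:ℝ) : ℝ) • besselD β f x‖ₑ^2 := by
    rw [wSobNorm, eLpNorm_eq_lintegral_rpow_enorm_toReal (by norm_num) (by norm_num)]
    rw [← ENNReal.rpow_natCast, ← ENNReal.rpow_mul]
    simp
  rw [e, scale_lint (r := 2*Real.pi) (by positivity) _ hm]
  rw [← mul_assoc, ← ENNReal.ofReal_mul (by positivity), ← lintegral_const_mul' _ _ (by simp)]
  apply lintegral_mono
  intro x
  simp only
  rw [bessel_eq, smul_smul ((2*Real.pi)⁻¹), inv_mul_cancel₀ (by positivity), one_smul, ← hH, enorm_smul, enorm_smul,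
    ← mul_assoc ‖jap _ ^ _‖ₑ, mul_pow _ ‖H x‖ₑ, ← mul_assoc]
  refine mul_le_mul_left ?_ _
  rw [← enorm_mul, ← ofReal_norm, ← ENNReal.ofReal_pow (norm_nonneg _), ← ENNReal.ofReal_pow (jap_pos x).le,
    ← ENNReal.ofReal_mul (by positivity)]
  apply ENNReal.ofReal_le_ofReal
  have hj : jap x ≤ jap ((2*Real.pi) • x) := by
    unfold jap
    apply Real.sqrt_le_sqrt
    rw [norm_smul, Real.norm_eq_abs, abs_of_pos (by positivity)]
    gcongr
    have := Real.pi_gt_three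
    nlinarith [norm_nonneg x]
  rw [Real.norm_eq_abs, sq_abs, Real.rpow_ofNat, mul_pow]
  have p0 : (2 * Real.pi)^n * (2 * Real.pi)^n * ((((2 * Real.pi)^n)⁻¹)^2) = 1 := by
    field_simp
  calc jap x^4 ≤ jap ((2*Real.pi) • x)^4 := by
        have := jap_pos x
        gcongr
    _ = ((2 * Real.pi)^n * (2 * Real.pi)^n * ((((2 * Real.pi)^n)⁻¹)^2)) * (jap ((2*Real.pi) • x)^2)^2 := by rw [p0]; ring
    _ = _ := by ring
open scoped Topology LineDeriv FourierTransform


lemma cd_sum {n k : ℕ} (z : Euc n) (ξ : Fin k → Euc n) : ∑ i, chainDiff k z ξ i = z := by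
  induction k generalizing z with
  | zero => simp [cd_base]
  | succ k ih =>
    rw [← Fin.cons_self_tail ξ, Fin.sum_univ_succ, cd_zero]
    simp_rw [cd_succ]
    rw [ih]; abel

lemma cd_max {n k : ℕ} (z : Euc n) (ξ : Fin k → Euc n) :
    ∃ l, jap z ≤ ((k:ℝ)+1) * jap (chainDiff k z ξ l) := by
  obtain ⟨l, -, hl⟩ := Finset.exists_max_image (Finset.univ : Finset (Fin (k+1)))
    (fun i => ‖chainDiff k z ξ i‖) ⟨0, Finset.mem_univ _⟩
  refine ⟨l, ?_⟩
  have h1 : ‖z‖ ≤ ((k:ℝ)+1) * ‖chainDiff k z ξ l‖ := by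
    calc ‖z‖ = ‖∑ i, chainDiff k z ξ i‖ := by rw [cd_sum]
      _ ≤ ∑ i, ‖chainDiff k z ξ i‖ := norm_sum_le _ _
      _ ≤ ∑ i : Fin (k+1), ‖chainDiff k z ξ l‖ := Finset.sum_le_sum fun i hi => hl i hi
      _ = _ := by simp
  unfold jap
  rw [Real.sqrt_le_left (by positivity), mul_pow, Real.sq_sqrt (by positivity)]
  have h2 : ‖z‖^2 ≤ (((k:ℝ)+1) * ‖chainDiff k z ξ l‖)^2 := by gcongr
  have h3 : (0:ℝ) ≤ k := by positivity
  nlinarith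

lemma alg_pt {n k : ℕ} {β b : ℝ} (hβ : 0 ≤ β) (hb : b ≤ β) (f : Fin (k+1) → Sch n)
    (z : Euc n) (ξ : Fin k → Euc n) :
    ENNReal.ofReal (jap z ^ β) * ∏ i, ‖ft (f i) (chainDiff k z ξ i)‖ₑ ≤
      ENNReal.ofReal (((k:ℝ)+1)^β) * ∑ l, (∏ i, (if i = l then 1 else ENNReal.ofReal (jap (chainDiff k z ξ i) ^ (-b)))) *
        ∏ i, ‖GG β (f i) (chainDiff k z ξ i)‖ₑ := by
  obtain ⟨l, hl⟩ := cd_max z ξ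
  have hs := Finset.single_le_sum (f := fun l => (∏ i, (if i = l then 1 else ENNReal.ofReal (jap (chainDiff k z ξ i) ^ (-b)))) *
        ∏ i, ‖GG β (f i) (chainDiff k z ξ i)‖ₑ) (fun _ _ => zero_le) (Finset.mem_univ l)
  refine le_trans ?_ (mul_le_mul_right hs _)
  have hG : ∀ i, ‖GG β (f i) (chainDiff k z ξ i)‖ₑ = ENNReal.ofReal (jap (chainDiff k z ξ i) ^ β) * ‖ft (f i) (chainDiff k z ξ i)‖ₑ := by
    intro i
    rw [GG_apply, enorm_mul]
    congr 1
    rw [← ofReal_norm, Complex.norm_real, Real.norm_eq_abs, abs_of_nonneg (Real.rpow_nonneg (jap_pos _).le _)]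
  simp only [hG]
  rw [Finset.prod_mul_distrib, ← mul_assoc, ← mul_assoc]
  refine mul_le_mul_left ?_ _
  rw [mul_assoc, ← Finset.prod_mul_distrib]
  have h1 : jap z ^ β ≤ ((k:ℝ)+1)^β * jap (chainDiff k z ξ l)^β := by
    rw [← Real.mul_rpow (by positivity) (jap_pos _).le]
    exact Real.rpow_le_rpow (jap_pos _).le hl hβ
  refine (ENNReal.ofReal_le_ofReal h1).trans ?_
  rw [ENNReal.ofReal_mul (by positivity)]
  gcongr
  have h2 : ∏ i, (if i = l then ENNReal.ofReal (jap (chainDiff k z ξ l)^β) else 1) = ENNReal.ofReal (jap (chainDiff k z ξ l)^β) := by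
    simp
  rw [← h2]
  apply Finset.prod_le_prod'
  intro i _
  split_ifs with h
  · rw [h, one_mul]
  · rw [← ENNReal.ofReal_mul (Real.rpow_nonneg (jap_pos _).le _), ← Real.rpow_add (jap_pos _)]
    rw [ENNReal.one_le_ofReal]
    exact Real.one_le_rpow (one_le_jap _) (by linarith)

lemma cs_sq {α : Type*} [MeasurableSpace α] (μ : Measure α) (u v : α → ℝ≥0∞) (hu : Measurable u) (hv : Measurable v) :
    ∫⁻ x, u x * v x ∂μ ≤ (∫⁻ x, u x^2 ∂μ)^(1/2:ℝ) * (∫⁻ x, v x^2 ∂μ)^(1/2:ℝ) := by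
  have := ENNReal.lintegral_mul_le_Lp_mul_Lq μ (p := 2) (q := 2) ⟨by norm_num, by norm_num, by norm_num⟩ hu.aemeasurable hv.aemeasurable
  simpa using this

lemma half_sq (x : ℝ≥0∞) : (x^2)^(1/2:ℝ) = x := by
  rw [← ENNReal.rpow_natCast, ← ENNReal.rpow_mul]; simp

lemma half_sq' (x : ℝ≥0∞) : (x^(1/2:ℝ))^2 = x := by
  rw [← ENNReal.rpow_natCast, ← ENNReal.rpow_mul]; simp

lemma real_exp {n k : ℕ} {α β lam : ℝ} (hl : lam < 1) (hα : α - β ≤ k * (1 - lam)) (η : Euc n) (hη : 1 ≤ ‖η‖) :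
    jap η ^ (α - β) * ‖η‖ ^ (-(k:ℝ)) * ‖η‖^(k * lam) ≤ 2 ^ (k * (1 - lam)) := by
  have h0 : 0 < ‖η‖ := by linarith
  have hj : jap η ≤ 2 * ‖η‖ := by
    unfold jap
    rw [Real.sqrt_le_left (by positivity)]
    nlinarith
  have hk : 0 ≤ k * (1 - lam) := mul_nonneg (by positivity) (by linarith)
  have h1 : jap η ^ (α - β) ≤ (2 * ‖η‖) ^ (k * (1 - lam)) :=
    (Real.rpow_le_rpow_of_exponent_le (one_le_jap η) hα).trans (Real.rpow_le_rpow (jap_pos _).le hj hk)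
  calc _ ≤ (2 * ‖η‖) ^ (k * (1 - lam)) * ‖η‖ ^ (-(k:ℝ)) * ‖η‖^(k * lam) := by gcongr
    _ = 2 ^ (k * (1 - lam)) * ‖η‖ ^ (k * (1 - lam) + -(k:ℝ) + k * lam) := by
      rw [Real.mul_rpow (by norm_num) h0.le, Real.rpow_add h0, Real.rpow_add h0]; ring
    _ = _ := by
      have : k * (1 - lam) + -(k:ℝ) + k * lam = 0 := by ring
      rw [this]; simp

lemma ptwise {m k : ℕ} (hm : 0 < m) {α β b : ℝ} (hβ : 0 ≤ β) (hb0 : 0 ≤ b) (hb : b ≤ β) (hb2 : 2*b < m)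
    (hb3 : (m:ℝ) - 2 < 2 * b) (hα : α - β ≤ k * (1 - ((m:ℝ)/2 - b))) :
    ∃ D : ℝ, 0 < D ∧ ∀ (f : Fin (k+1) → Sch (m+1)) (r : Fin k → ℝ), (∀ i, 0 < r i) → ∀ η : Euc (m+1), 1 ≤ ‖η‖ →
      ‖jap η ^ α * Kj k r (fun i => ft (f i)) η‖ₑ ≤ ENNReal.ofReal (D * ∏ i, (1 + r i)^((m:ℝ)/2 - b)) *
        (∫⁻ ξ, ∏ i, ‖GG β (f i) (chainDiff k η ξ i)‖ₑ^2 ∂(Measure.pi fun i => ewaldM (m+1) (r i) η))^(1/2:ℝ) := by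
  obtain ⟨C, hC, HC⟩ := kernel_bound hm hb0 hb2
  set lam := (m:ℝ)/2 - b with hlam
  have hl0 : 0 < lam := by rw [hlam]; linarith
  have hl1 : lam < 1 := by rw [hlam]; linarith
  refine ⟨2 ^ (k * (1 - lam)) * ((k:ℝ)+1)^β * ((k:ℝ)+1) * (Real.sqrt C)^k, by positivity, fun f r hr η hη => ?_⟩
  have h0 : 0 < ‖η‖ := by linarith
  have : ∀ i, IsFiniteMeasure (ewaldM (m+1) (r i) η) := fun i => ewaldM_fin hm (hr i) h0
  set μ := Measure.pi fun i => ewaldM (m+1) (r i) η with hμ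
  set B := ∫⁻ ξ, ∏ i, ‖GG β (f i) (chainDiff k η ξ i)‖ₑ^2 ∂μ with hB
  -- kernel part
  set Q : ℝ := ∏ i : Fin k, (Real.sqrt C * (1 + r i)^lam * ‖η‖^lam) with hQ
  have hQ0 : 0 ≤ Q := Finset.prod_nonneg fun i _ => by have := hr i; positivity
  have hker : ∀ l, ∫⁻ ξ, (∏ i, (if i = l then 1 else ENNReal.ofReal (jap (chainDiff k η ξ i) ^ (-b))))^2 ∂μ ≤ (ENNReal.ofReal Q)^2 := by
    intro l
    have hjc : Continuous fun x : Euc (m+1) => jap x ^ (-(2*b)) :=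
      jap_cont.rpow_const fun x => Or.inl (jap_pos x).ne'
    have := chain_excl (fun x : Euc (m+1) => ENNReal.ofReal (jap x ^ (-(2*b)))) hjc.measurable.ennreal_ofReal
      (fun x => by simp [jap]) (fun i => ewaldM (m+1) (r i) η)
      (fun i => ENNReal.ofReal ((Real.sqrt C * (1 + r i)^lam * ‖η‖^lam)^2)) (fun i ζ => by
        rw [ewaldM_eq]
        have hri := hr i
        refine (HC _ (r i * ‖η‖ / 2) (by positivity) ζ).trans ?_
        apply ENNReal.ofReal_le_ofReal
        rw [mul_pow, mul_pow, Real.sq_sqrt hC.le, mul_assoc]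
        gcongr
        rw [← Real.rpow_natCast, ← Real.rpow_natCast, ← Real.rpow_mul (by positivity), ← Real.rpow_mul (by positivity),
          ← Real.mul_rpow (by positivity) (by positivity)]
        have : (m:ℝ) - 2 * b = lam * (2:ℕ) := by rw [hlam]; push_cast; ring
        rw [this]
        apply Real.rpow_le_rpow (by positivity) _ (by positivity)
        nlinarith) η l
    have e : (ENNReal.ofReal Q)^2 = ∏ i, ENNReal.ofReal ((Real.sqrt C * (1 + r i)^lam * ‖η‖^lam)^2) := by
      rw [← ENNReal.ofReal_pow hQ0, hQ, ← Finset.prod_pow, ENNReal.ofReal_prod_of_nonneg (fun i _ => by positivity)]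
    rw [e]
    refine le_trans (le_of_eq ?_) this
    congr 1; funext ξ
    rw [← Finset.prod_pow]
    apply Finset.prod_congr rfl
    intro i _
    split_ifs
    · simp
    · rw [← ENNReal.ofReal_pow (Real.rpow_nonneg (jap_pos _).le _), ← Real.rpow_natCast, ← Real.rpow_mul (jap_pos _).le]
      congr 2; push_cast; ring
  have hPm : Measurable fun ξ : Fin k → Euc (m+1) => ∏ i, ‖GG β (f i) (chainDiff k η ξ i)‖ₑ := by
    apply Finset.measurable_prod
    intro i _
    exact ((GG β (f i)).continuous.comp (cd_cont η i)).measurable.enorm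
  have hwm : ∀ l, Measurable fun ξ : Fin k → Euc (m+1) =>
      (∏ i, (if i = l then 1 else ENNReal.ofReal (jap (chainDiff k η ξ i) ^ (-b)))) := by
    intro l
    apply Finset.measurable_prod
    intro i _
    split_ifs
    · exact measurable_const
    · have hjc : Continuous fun x : Euc (m+1) => jap x ^ (-b) :=
        jap_cont.rpow_const fun x => Or.inl (jap_pos x).ne'
      exact (hjc.comp (cd_cont η i)).measurable.ennreal_ofReal
  have hT : ∀ l, ∫⁻ ξ, (∏ i, (if i = l then 1 else ENNReal.ofReal (jap (chainDiff k η ξ i) ^ (-b)))) *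
        ∏ i, ‖GG β (f i) (chainDiff k η ξ i)‖ₑ ∂μ ≤ ENNReal.ofReal Q * B^(1/2:ℝ) := by
    intro l
    refine (cs_sq μ _ _ (hwm l) hPm).trans ?_
    gcongr
    · rw [← half_sq (ENNReal.ofReal Q)]
      exact ENNReal.rpow_le_rpow (hker l) (by norm_num)
    · apply le_of_eq
      rw [hB]
      congr 1; funext ξ
      rw [Finset.prod_pow]
  set I := ∫⁻ ξ, ∏ i, ‖ft (f i) (chainDiff k η ξ i)‖ₑ ∂μ with hI
  have hI1 : ENNReal.ofReal (jap η ^ β) * I ≤ ENNReal.ofReal (((k:ℝ)+1)^β) * (((k:ℝ≥0∞)+1) * (ENNReal.ofReal Q * B^(1/2:ℝ))) := by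
    rw [hI, ← lintegral_const_mul' _ _ (by simp)]
    refine (lintegral_mono fun ξ => alg_pt hβ hb f η ξ).trans ?_
    have hsm : ∀ l, Measurable fun ξ : Fin k → Euc (m+1) =>
      (∏ i, (if i = l then 1 else ENNReal.ofReal (jap (chainDiff k η ξ i) ^ (-b)))) *
        ∏ i, ‖GG β (f i) (chainDiff k η ξ i)‖ₑ := fun l => (hwm l).mul hPm
    rw [lintegral_const_mul' _ _ (by simp), lintegral_finsetSum _ (fun l _ => hsm l)]
    gcongr
    refine (Finset.sum_le_sum fun l _ => hT l).trans ?_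
    simp
  have hKj : ‖Kj k r (fun i => ft (f i)) η‖ₑ ≤ ENNReal.ofReal (‖η‖ ^ (-(k:ℝ))) * I := by
    rw [Kj, enorm_mul]
    gcongr
    · rw [← ofReal_norm, Real.norm_eq_abs, abs_of_nonneg (by positivity)]
    · refine (enorm_integral_le_lintegral_enorm _).trans ?_
      apply le_of_eq
      rw [hI]
      congr 1; funext ξ
      rw [← ofReal_norm, Real.norm_eq_abs, abs_of_nonneg (by positivity), ENNReal.ofReal_prod_of_nonneg (fun i _ => norm_nonneg _)]
      simp only [ofReal_norm]
  have hja : ‖jap η ^ α‖ₑ = ENNReal.ofReal (jap η ^ (α - β)) * ENNReal.ofReal (jap η ^ β) := by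
    rw [← ENNReal.ofReal_mul (Real.rpow_nonneg (jap_pos _).le _), ← Real.rpow_add (jap_pos _), sub_add_cancel,
      ← ofReal_norm, Real.norm_eq_abs, abs_of_nonneg (Real.rpow_nonneg (jap_pos _).le _)]
  have hQe : Q = (Real.sqrt C)^k * (∏ i, (1 + r i)^lam) * ‖η‖^(k*lam) := by
    rw [hQ, Finset.prod_mul_distrib, Finset.prod_mul_distrib]
    simp only [Finset.prod_const, Finset.card_univ, Fintype.card_fin]
    rw [mul_comm (k:ℝ) lam, Real.rpow_mul h0.le, Real.rpow_natCast]
  have hja0 : 0 ≤ jap η ^ (α - β) := Real.rpow_nonneg (jap_pos _).le _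
  have hP0 : 0 ≤ ∏ i, (1 + r i)^lam := Finset.prod_nonneg fun i _ => by have := hr i; positivity
  have hre := real_exp (k := k) hl1 hα η hη
  rw [enorm_mul]
  calc _ ≤ ENNReal.ofReal (jap η ^ (α - β)) * ENNReal.ofReal (jap η ^ β) * (ENNReal.ofReal (‖η‖ ^ (-(k:ℝ))) * I) := by
        rw [hja]; gcongr
    _ = ENNReal.ofReal (jap η ^ (α - β)) * ENNReal.ofReal (‖η‖ ^ (-(k:ℝ))) * (ENNReal.ofReal (jap η ^ β) * I) := by ring
    _ ≤ ENNReal.ofReal (jap η ^ (α - β)) * ENNReal.ofReal (‖η‖ ^ (-(k:ℝ))) * 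
        (ENNReal.ofReal (((k:ℝ)+1)^β) * (((k:ℝ≥0∞)+1) * (ENNReal.ofReal Q * B^(1/2:ℝ)))) := by gcongr
    _ = ENNReal.ofReal (jap η ^ (α - β) * ‖η‖ ^ (-(k:ℝ)) * ((k:ℝ)+1)^β * ((k:ℝ)+1) * Q) * B^(1/2:ℝ) := by
        have : ((k:ℝ≥0∞)+1) = ENNReal.ofReal ((k:ℝ)+1) := by
          rw [ENNReal.ofReal_add (by positivity) (by norm_num)]; simp
        rw [this, ENNReal.ofReal_mul (by positivity), ENNReal.ofReal_mul (by positivity), ENNReal.ofReal_mul (by positivity),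
          ENNReal.ofReal_mul (by positivity)]
        ring
    _ ≤ _ := by
        refine mul_le_mul_left (ENNReal.ofReal_le_ofReal ?_) _
        rw [hQe]
        calc _ = (jap η ^ (α - β) * ‖η‖ ^ (-(k:ℝ)) * ‖η‖^(k * lam)) * ((((k:ℝ)+1)^β * ((k:ℝ)+1) * (Real.sqrt C)^k) * ∏ i, (1 + r i)^lam) := by ring
          _ ≤ 2 ^ (k * (1 - lam)) * ((((k:ℝ)+1)^β * ((k:ℝ)+1) * (Real.sqrt C)^k) * ∏ i, (1 + r i)^lam) := by
            gcongr
          _ = _ := by ring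

lemma core {m k : ℕ} (hm : 0 < m) {α β b : ℝ} (hβ : 0 ≤ β) (hb0 : 0 ≤ b) (hb : b ≤ β) (hb2 : 2*b < m)
    (hb3 : (m:ℝ) - 2 < 2 * b) (hα : α - β ≤ k * (1 - ((m:ℝ)/2 - b)))
    (C₀ : ℝ) (hC₀ : 1 ≤ C₀) (χ : Euc (m+1) → ℝ) 
    (hχ01 : ∀ ξ, χ ξ ∈ Set.Icc (0 : ℝ) 1)
    (hχ0 : ∀ ξ : Euc (m+1), ‖ξ‖ < C₀ → χ ξ = 0) :
    ∃ C : ℝ, 0 < C ∧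
      ∀ (f : Fin (k + 1) → SchwartzMap (Euc (m+1)) ℂ) (r : Fin k → ℝ), (∀ i, 0 < r i) →
        eLpNorm (fun η : Euc (m+1) =>
            (jap η ^ α : ℝ) * (χ η * Kj k r (fun i => ft ⇑(f i)) η)) 2 volume
          ≤ ENNReal.ofReal (C * ∏ i : Fin k, (1 + r i) ^ ((m:ℝ)/2 - b)) *
            ∏ l : Fin (k + 1), wSobNorm β 2 (⇑(f l)) := by
  obtain ⟨D, hD, HD⟩ := ptwise (k := k) hm hβ hb0 hb hb2 hb3 hα
  obtain ⟨S, hS, HS⟩ := sob_bound (m+1) β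
  set K : ℝ≥0∞ := KK m * (((m+1:ℕ):ℝ≥0∞)*2) with hKdef
  have hK : K ≠ ⊤ := ENNReal.mul_ne_top (KK_ne_top m) (by finiteness)
  set E : ℝ≥0∞ := (K^k * S^(k+1))^(1/2:ℝ) with hEdef
  have hE : E ≠ ⊤ := ENNReal.rpow_ne_top_of_nonneg (by norm_num)
    (ENNReal.mul_ne_top (ENNReal.pow_ne_top hK) (ENNReal.pow_ne_top hS))
  refine ⟨D * (E.toReal + 1), by positivity, fun f r hr => ?_⟩
  set P := ∏ i : Fin k, (1 + r i) ^ ((m:ℝ)/2 - b) with hP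
  have hP0 : 0 ≤ P := Finset.prod_nonneg fun i _ => by have := hr i; positivity
  set V := Vc k (Fin.cons (N1 (GG β (f 0))) (fun i => N2 (GG β (f i.succ)))) with hV
  have hpt : ∀ η : Euc (m+1), ‖(jap η ^ α : ℝ) * (χ η * Kj k r (fun i => ft ⇑(f i)) η)‖ₑ^2 ≤
      (ENNReal.ofReal (D * P))^2 * K^k * V η := by
    intro η
    by_cases hη : ‖η‖ < C₀
    · simp [hχ0 η hη]
    · have hη1 : 1 ≤ ‖η‖ := hC₀.trans (not_lt.1 hη)
      have h0 : 0 < ‖η‖ := by linarith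
      have : ∀ i, IsFiniteMeasure (ewaldM (m+1) (r i) η) := fun i => ewaldM_fin hm (hr i) h0
      have h1 : ‖(jap η ^ α : ℝ) * (χ η * Kj k r (fun i => ft ⇑(f i)) η)‖ₑ ≤ ‖(jap η ^ α : ℝ) * Kj k r (fun i => ft ⇑(f i)) η‖ₑ := by
        rw [enorm_le_iff_norm_le, mul_left_comm, norm_mul (χ η)]
        have := hχ01 η
        apply mul_le_of_le_one_left (norm_nonneg _)
        rw [Real.norm_eq_abs, abs_of_nonneg this.1]
        exact this.2
      refine (pow_le_pow_left' (h1.trans (HD f r hr η hη1)) 2).trans ?_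
      rw [mul_pow, half_sq', mul_assoc]
      gcongr
      exact chain_trace _ hK (fun i => by
        have hri := hr i
        rw [ewaldM_eq]; exact TP_sphere _ (by positivity)) (fun i => GG β (f i)) η
  have hintg : ∫⁻ η, V η ≤ ∏ l, (S * wSobNorm β 2 (f l) ^ 2) := by
    rw [hV, Vc_int]
    · apply Finset.prod_le_prod'
      intro i _
      refine Fin.cases ?_ (fun j => ?_) i
      · rw [Fin.cons_zero]
        refine le_trans (lintegral_mono fun x => ?_) (HS (f 0))
        exact le_self_add
      · rw [Fin.cons_succ]
        exact HS _
    · intro i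
      refine Fin.cases ?_ (fun j => ?_) i
      · rw [Fin.cons_zero]; exact N1_meas _
      · rw [Fin.cons_succ]; exact N2_meas _
  rw [eLpNorm_eq_lintegral_rpow_enorm_toReal (by norm_num) (by norm_num)]
  have hfin : (ENNReal.ofReal (D * P))^2 * K^k ≠ ⊤ := ENNReal.mul_ne_top (by finiteness) (ENNReal.pow_ne_top hK)
  have hall : ∫⁻ η : Euc (m+1), ‖(jap η ^ α : ℝ) * (χ η * Kj k r (fun i => ft ⇑(f i)) η)‖ₑ^2 ≤
      (ENNReal.ofReal (D * P))^2 * (K^k * S^(k+1)) * (∏ l, wSobNorm β 2 (f l))^2 := by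
    refine (lintegral_mono hpt).trans ?_
    rw [lintegral_const_mul' _ _ hfin]
    refine (mul_le_mul_right hintg _).trans (le_of_eq ?_)
    rw [Finset.prod_mul_distrib, Finset.prod_pow]
    simp only [Finset.prod_const, Finset.card_univ, Fintype.card_fin]
    ring
  have h2 := ENNReal.rpow_le_rpow hall (z := 1/2) (by norm_num)
  rw [ENNReal.mul_rpow_of_nonneg _ _ (by norm_num), ENNReal.mul_rpow_of_nonneg _ _ (by norm_num), half_sq, half_sq] at h2
  simp only [ENNReal.toReal_ofNat, ENNReal.rpow_ofNat]
  refine h2.trans ?_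
  refine mul_le_mul_left ?_ _
  have e3 : D * (E.toReal + 1) * P = (D * P) * (E.toReal + 1) := by ring
  rw [← hEdef, e3, ENNReal.ofReal_mul (p := D * P) (by positivity)]
  refine mul_le_mul_right ?_ _
  refine (ENNReal.ofReal_toReal hE).symm.le.trans (ENNReal.ofReal_le_ofReal (by linarith))

/-- weighted `L²` estimate for `χ·K_{j,𝐫}(f̂₁,…,f̂_j)`, `j = k + 1 ≥ 3`. -/
theorem stmt9 (n k : ℕ) (hn : 2 ≤ n) (hk : 2 ≤ k) (β α : ℝ) (hβ : 0 ≤ β)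
    (hrange : (((n : ℝ) - 3) / 2 < β ∧ β < ((n : ℝ) - 1) / 2 ∧
        α ≤ β + (k : ℝ) * (β - ((n : ℝ) - 3) / 2)) ∨
      (((n : ℝ) - 1) / 2 ≤ β ∧ α < β + (k : ℝ)))
    (C₀ : ℝ) (hC₀ : 1 ≤ C₀) (χ : Euc n → ℝ) (hχsm : ContDiff ℝ (⊤ : ℕ∞) χ)
    (hχ01 : ∀ ξ, χ ξ ∈ Set.Icc (0 : ℝ) 1)
    (hχ1 : ∀ ξ : Euc n, 2 * C₀ < ‖ξ‖ → χ ξ = 1)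
    (hχ0 : ∀ ξ : Euc n, ‖ξ‖ < C₀ → χ ξ = 0) :
    ∃ lam C : ℝ, 0 < lam ∧ lam < 1 ∧ 0 < C ∧
      ∀ (f : Fin (k + 1) → SchwartzMap (Euc n) ℂ) (r : Fin k → ℝ), (∀ i, 0 < r i) →
        eLpNorm (fun η : Euc n =>
            (jap η ^ α : ℝ) * (χ η * Kj k r (fun i => ft ⇑(f i)) η)) 2 volume
          ≤ ENNReal.ofReal (C * ∏ i : Fin k, (1 + r i) ^ lam) *
            ∏ l : Fin (k + 1), wSobNorm β 2 (⇑(f l)) := by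
  obtain ⟨m, rfl⟩ : ∃ m, n = m + 1 := ⟨n - 1, by omega⟩
  have hm : 0 < m := by omega
  have hm' : (1:ℝ) ≤ m := by exact_mod_cast hm
  have hk' : (2:ℝ) ≤ k := by exact_mod_cast hk
  obtain ⟨b, hb0, hb, hb2, hb3, hα⟩ : ∃ b : ℝ, 0 ≤ b ∧ b ≤ β ∧ 2*b < m ∧ (m:ℝ) - 2 < 2 * b ∧
      α - β ≤ k * (1 - ((m:ℝ)/2 - b)) := by
    push_cast at hrange
    rcases hrange with ⟨h1, h2, h3⟩ | ⟨h1, h2⟩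
    · refine ⟨β, hβ, le_rfl, by linarith, by linarith, ?_⟩
      have : (1 - ((m:ℝ)/2 - β)) = β - ((m:ℝ) + 1 - 3) / 2 := by ring
      rw [this]; linarith
    · have hkp : (0:ℝ) < k := by linarith
      set t := max (max 0 ((m:ℝ)/2 - 1)) ((m:ℝ)/2 - (1 - (α - β)/k)) with ht
      have ht1 : t < (m:ℝ)/2 := by
        rw [ht]
        refine max_lt (max_lt (by linarith) (by linarith)) ?_
        have : (α - β)/k < 1 := by rw [div_lt_one hkp]; linarith
        linarith
      have a1 : 0 ≤ t := (le_max_left _ _).trans (le_max_left _ _)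
      have a2 : (m:ℝ)/2 - 1 ≤ t := (le_max_right _ _).trans (le_max_left _ _)
      have a3 : (m:ℝ)/2 - (1 - (α - β)/k) ≤ t := le_max_right _ _
      refine ⟨(t + (m:ℝ)/2)/2, by linarith, by linarith, by linarith, by linarith, ?_⟩
      have : (α - β)/k ≤ 1 - ((m:ℝ)/2 - (t + (m:ℝ)/2)/2) := by linarith
      rw [div_le_iff₀ hkp] at this
      linarith
  obtain ⟨C, hC, H⟩ := core (k := k) hm hβ hb0 hb hb2 hb3 hα C₀ hC₀ χ hχ01 hχ0
  exact ⟨(m:ℝ)/2 - b, C, by linarith, by linarith, hC, H⟩
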